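/- arXiv:1805.02213 — 2 statements merged into one kernel-verified Lean document; each statement's English description precedes it below -/
import Mathlib

section
/- Let σ be an irreducible incommensurable multiscale substitution scheme in ℝ^d which is normalized, i.e. vol T_i = 1 for all 1 ≤ i ≤ n (so that α_ij^(k) = β_ij^(k) for all i, j, k). Let {π_m} be a Kakutani sequence of partitions of a prototile T_i ∈ τ_σ, let V_m denote the maximal volume of a tile in π_m, and set b_hj = Σ_{k=1}^{k_hj} (1 − (β_hj^(k))^d)/d. Then the matrix Q_σ has positive entries and all its rows are equal; writing q_h for the common entry in column h of Q_σ, for every 1 ≤ j ≤ n the number of tiles of type j in π_m, multiplied by V_m, converges to Σ_{h=1}^n b_hj·q_h as m → ∞, and this limit is independent of i. -/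
/-!
The tiles produced from `T i` correspond to directed paths from `i` in the graph whose edges are the
substitution tiles, an edge having length `-log (β ^ d)`; when `T i` has volume `1`, a tile of
volume `v` corresponds to a path of length `-log v`. As the volumes of the pieces of a tile add up
to its volume, the numbers `β ^ d` are the transition probabilities of an irreducible Markov chain
with matrix `M_σ`.

The partition `π_m` is obtained by substituting exactly the tiles of volume greater than `V_m`, so
the number of its tiles of type `j` is a combination of increments of the functions `A h i t`, the
number of paths from `i` to `h` of length less than `t`, at `t = -log V_m`
(`IsKakutaniSeq.countType_eq`). Such an increment over `[t - ℓ, t)` contributes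
`c_h (1 - exp (-ℓ))` to the limit if `exp (-t) * A h i t` tends to `c_h`.

That this limit exists and does not depend on `i` is a renewal theorem
(`MetricDigraph.IsSubharmonic.exists_tendsto`). The function `exp (-t) * A h i t` is, up to an
exponentially small error, an average of its earlier values. If it is nearly maximal at some late
time, it is nearly maximal at all earlier times differing from it by a path length;
incommensurability makes these times `ε`-dense (`MetricDigraph.hasDensePathLengths_of_irrational`),
monotonicity of `A` fills the gaps, and the maximum principle
`MetricDigraph.IsSubharmonic.le_of_le_window` carries the resulting lower bound to all later times.
Integrating the renewal equation against a stationary vector identifies the limit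
(`MetricDigraph.mul_meanLength_eq`).

Finally, the columns of `adj (1 - M_σ)` are harmonic for `M_σ`, hence constant, its rows are
stationary, and its diagonal entries are positive (`adjugate_one_sub_row_eq`,
`adjugate_one_sub_row_vecMul`, `adjugate_one_sub_pos`); its common row therefore serves as the
stationary vector, and the mean edge length is `d` times the denominator in the definition of `Q_σ`.
-/

open MeasureTheory Filter Topology
open scoped Pointwise

noncomputable section

/-- Euclidean space `ℝ^d`. -/
abbrev Euc (d : ℕ) : Type := EuclideanSpace ℝ (Fin d)

/-- A tile in `ℝ^d`: a bounded Lebesgue measurable set of positive measure whose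
boundary has measure zero. -/
def IsTile {d : ℕ} (T : Set (Euc d)) : Prop :=
  Bornology.IsBounded T ∧ NullMeasurableSet T volume ∧ 0 < volume T ∧
    volume (frontier T) = 0

/-- A multiscale substitution scheme in `ℝ^d` on `n` prototiles `T 1, …, T n`,
with `numSub i j` substitution tiles of type `j` in `ω(T i)`, scaling constants
`scale i j k`, constants of substitution
`β_ij^(k) = (vol T_j / vol T_i)^(1/d) · α_ij^(k) ∈ (0,1)`, and a nonempty family
of substitution rules, each rule assigning to every prototile `T i` a partition of
`T i` into sets isometric to the substitution tiles `scale i j k • T j`. -/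
structure MSScheme (d n : ℕ) where
  T : Fin n → Set (Euc d)
  tile : ∀ i, IsTile (T i)
  numSub : Fin n → Fin n → ℕ
  scale : (i j : Fin n) → Fin (numSub i j) → ℝ
  scale_pos : ∀ i j k, 0 < scale i j k
  beta_pos : ∀ i j k,
    0 < ((volume (T j)).toReal / (volume (T i)).toReal) ^ (1 / (d : ℝ)) * scale i j k
  beta_lt_one : ∀ i j k,
    ((volume (T j)).toReal / (volume (T i)).toReal) ^ (1 / (d : ℝ)) * scale i j k < 1
  rules : Set ((i j : Fin n) → Fin (numSub i j) → Set (Euc d))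
  rules_nonempty : rules.Nonempty
  rules_iso : ∀ ϱ ∈ rules, ∀ i j k, ∃ φ : Euc d ≃ᵢ Euc d,
    ϱ i j k = φ '' (scale i j k • T j)
  rules_disjoint : ∀ ϱ ∈ rules, ∀ i : Fin n, ∀ p q : Σ j : Fin n, Fin (numSub i j),
    p ≠ q → Disjoint (interior (ϱ i p.1 p.2)) (interior (ϱ i q.1 q.2))
  rules_cover : ∀ ϱ ∈ rules, ∀ i : Fin n,
    (⋃ p : Σ j : Fin n, Fin (numSub i j), ϱ i p.1 p.2) = T i

/-- The constants of substitution `β_ij^(k) = (vol T_j / vol T_i)^(1/d) · α_ij^(k)`. -/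
def MSScheme.beta {d n : ℕ} (σ : MSScheme d n) (i j : Fin n)
    (k : Fin (σ.numSub i j)) : ℝ :=
  ((volume (σ.T j)).toReal / (volume (σ.T i)).toReal) ^ (1 / (d : ℝ)) * σ.scale i j k

/-- A labeled tile: a subset of `ℝ^d` together with a type label. -/
structure LTile (d n : ℕ) where
  carrier : Set (Euc d)
  type : Fin n

noncomputable instance {d n : ℕ} : DecidableEq (LTile d n) := Classical.decEq _

/-- `SubstitutesTo σ S P` : the labeled tile `S`, a rescaled isometric copy
`φ (a • T_{type S})` of the prototile of its type, is partitioned by the collection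
`P` obtained by applying some substitution rule of the scheme,
`ϱ(a·φ(T_i)) = a·φ(ϱ(T_i))`, with the types of the pieces given by the scheme. -/
def SubstitutesTo {d n : ℕ} (σ : MSScheme d n) (S : LTile d n)
    (P : Finset (LTile d n)) : Prop :=
  ∃ ϱ ∈ σ.rules, ∃ a : ℝ, 0 < a ∧ ∃ φ : Euc d ≃ᵢ Euc d,
    S.carrier = φ '' (a • σ.T S.type) ∧
    P = Finset.image
      (fun p : Σ j : Fin n, Fin (σ.numSub S.type j) =>
        (⟨φ '' (a • ϱ S.type p.1 p.2), p.1⟩ : LTile d n)) Finset.univ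

open Classical in
/-- The tiles of maximal volume in a partition. -/
def maxTiles {d n : ℕ} (P : Finset (LTile d n)) : Finset (LTile d n) :=
  P.filter fun S => ∀ S' ∈ P, volume S'.carrier ≤ volume S.carrier

/-- A Kakutani sequence of partitions of the prototile `T i`: start with the trivial
partition, and at each step substitute exactly the tiles of maximal volume, each
according to an arbitrarily and independently chosen substitution rule. -/
def IsKakutaniSeq {d n : ℕ} (σ : MSScheme d n) (i : Fin n)
    (π : ℕ → Finset (LTile d n)) : Prop :=
  π 0 = {(⟨σ.T i, i⟩ : LTile d n)} ∧
  ∀ m, ∃ repl : LTile d n → Finset (LTile d n),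
    (∀ S ∈ maxTiles (π m), SubstitutesTo σ S (repl S)) ∧
    π (m + 1) = (π m \ maxTiles (π m)) ∪ (maxTiles (π m)).biUnion repl

/-- A generation sequence of partitions of the prototile `T i`: start with the trivial
partition, and at each step substitute all tiles, each according to an arbitrarily
and independently chosen substitution rule. -/
def IsGenSeq {d n : ℕ} (σ : MSScheme d n) (i : Fin n)
    (δ : ℕ → Finset (LTile d n)) : Prop :=
  δ 0 = {(⟨σ.T i, i⟩ : LTile d n)} ∧
  ∀ m, ∃ repl : LTile d n → Finset (LTile d n),
    (∀ S ∈ δ m, SubstitutesTo σ S (repl S)) ∧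
    δ (m + 1) = (δ m).biUnion repl

/-- A marking sequence of a sequence of partitions of `U`: finite sets of (distinct)
points of `U` such that every tile of the `m`-th partition contains exactly one point
of `x m`. -/
def IsMarking {d n : ℕ} (U : Set (Euc d)) (γ : ℕ → Finset (LTile d n))
    (x : ℕ → Finset (Euc d)) : Prop :=
  ∀ m, (↑(x m) : Set (Euc d)) ⊆ U ∧
    ∀ S ∈ γ m, ∃! p, p ∈ x m ∧ p ∈ S.carrier

/-- An `r`-marking sequence: finite sets of (distinct) points of `U` such that every
tile of type `r` of the `m`-th partition contains exactly one point of `x m`, and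
every point of `x m` lies in a tile of type `r`. -/
def IsRMarking {d n : ℕ} (U : Set (Euc d)) (γ : ℕ → Finset (LTile d n))
    (r : Fin n) (x : ℕ → Finset (Euc d)) : Prop :=
  ∀ m, (↑(x m) : Set (Euc d)) ⊆ U ∧
    (∀ S ∈ γ m, S.type = r → ∃! p, p ∈ x m ∧ p ∈ S.carrier) ∧
    ∀ p ∈ x m, ∃ S ∈ γ m, S.type = r ∧ p ∈ S.carrier

/-- A sequence of finite sets of points is uniformly distributed in `U` if the
normalized sampling averages of every continuous function converge to its
normalized Lebesgue integral over `U`. -/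
def MarkingUD {d : ℕ} (U : Set (Euc d)) (x : ℕ → Finset (Euc d)) : Prop :=
  ∀ f : Euc d → ℝ, ContinuousOn f U →
    Tendsto (fun m => (∑ p ∈ x m, f p) / ((x m).card : ℝ)) atTop
      (𝓝 ((∫ t in U, f t) / (volume U).toReal))

/-- Irreducibility: every type `j` is produced from every prototile `T i` by some
finite (positive) number of substitutions. -/
def MSScheme.Irreducible {d n : ℕ} (σ : MSScheme d n) : Prop :=
  ∀ i j : Fin n, Relation.TransGen (fun a b => 0 < σ.numSub a b) i j

/-- `σ.IsClosedPathLogVol i a` : some tile of type `i` produced from `T i` by finitely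
many substitutions has `log (vol T' / vol T_i) = a`; equivalently, `a` is the sum of
`log ((β_ij^(k))^d)` along some closed path from `i` to `i` in the associated graph. -/
def MSScheme.IsClosedPathLogVol {d n : ℕ} (σ : MSScheme d n)
    (i : Fin n) (a : ℝ) : Prop :=
  ∃ m : ℕ, 0 < m ∧ ∃ p : Fin (m + 1) → Fin n, p 0 = i ∧ p (Fin.last m) = i ∧
    ∃ e : (t : Fin m) → Fin (σ.numSub (p t.castSucc) (p t.succ)),
      a = ∑ t : Fin m, Real.log (σ.beta (p t.castSucc) (p t.succ) (e t) ^ d)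

/-- Incommensurability: there are tiles `T'` of type `i` produced from `T i` and `T''`
of type `j` produced from `T j` with `log (vol T' / vol T_i)` not a rational multiple
of `log (vol T'' / vol T_j)`. -/
def MSScheme.Incommensurable {d n : ℕ} (σ : MSScheme d n) : Prop :=
  ∃ (i j : Fin n) (a b : ℝ), σ.IsClosedPathLogVol i a ∧ σ.IsClosedPathLogVol j b ∧
    ∀ q : ℚ, a ≠ (q : ℝ) * b

/-- The matrix `(M_σ)_ij = Σ_k (β_ij^(k))^d`. -/
def Mmat {d n : ℕ} (σ : MSScheme d n) : Matrix (Fin n) (Fin n) ℝ :=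
  Matrix.of fun i j => ∑ k : Fin (σ.numSub i j), σ.beta i j k ^ d

/-- The matrix `(M'_σ)_ij = Σ_k (β_ij^(k))^d · log β_ij^(k)`. -/
def M'mat {d n : ℕ} (σ : MSScheme d n) : Matrix (Fin n) (Fin n) ℝ :=
  Matrix.of fun i j => ∑ k : Fin (σ.numSub i j), σ.beta i j k ^ d * Real.log (σ.beta i j k)

/-- `Q_σ = adj (I − M_σ) / (− tr (adj (I − M_σ) · M'_σ))`. -/
def Qmat {d n : ℕ} (σ : MSScheme d n) : Matrix (Fin n) (Fin n) ℝ :=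
  (-(Matrix.trace ((1 - Mmat σ).adjugate * M'mat σ)))⁻¹ • (1 - Mmat σ).adjugate

/-- The number of tiles of type `r` in a partition. -/
def countType {d n : ℕ} (P : Finset (LTile d n)) (r : Fin n) : ℕ :=
  (P.filter fun S => S.type = r).card

/-- The union of the tiles of type `r` in a partition. -/
def typeUnion {d n : ℕ} (P : Finset (LTile d n)) (r : Fin n) : Set (Euc d) :=
  ⋃ S ∈ P.filter (fun S => S.type = r), S.carrier

/-- A fixed scale scheme: all scaling constants equal the contraction constant `α`. -/
def MSScheme.FixedScale {d n : ℕ} (σ : MSScheme d n) (α : ℝ) : Prop :=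
  α ∈ Set.Ioo (0 : ℝ) 1 ∧ ∀ i j k, σ.scale i j k = α

/-- The substitution matrix `S_ij = k_ij` (as a real matrix). -/
def Smat {d n : ℕ} (σ : MSScheme d n) : Matrix (Fin n) (Fin n) ℝ :=
  Matrix.of fun i j => (σ.numSub i j : ℝ)

/-- A primitive scheme: some power of the substitution matrix is entrywise positive. -/
def MSScheme.Primitive {d n : ℕ} (σ : MSScheme d n) : Prop :=
  ∃ k : ℕ, ∀ i j, 0 < (Smat σ ^ k) i j

end

/-! ### Subharmonic functions on a metric digraph -/

/-- A directed multigraph with finitely many edges out of every vertex, each of them carrying a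
positive length. -/
structure MetricDigraph (ι : Type*) where
  Edge : ι → Type*
  [fintypeEdge : ∀ i, Fintype (Edge i)]
  tgt : ∀ {i}, Edge i → ι
  len : ∀ {i}, Edge i → ℝ
  len_pos : ∀ {i} (e : Edge i), 0 < len e

namespace MetricDigraph

attribute [instance] fintypeEdge

variable {ι : Type*} (G : MetricDigraph ι)

lemma exists_pos_le_len [Finite ι] : ∃ δ > 0, ∀ i (e : G.Edge i), δ ≤ G.len e := by
  obtain ⟨C, hC⟩ := (Set.finite_range fun e : Σ i, G.Edge i => (G.len e.2)⁻¹).bddAbove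
  refine ⟨(max C 1)⁻¹, by positivity, fun i e => inv_le_of_inv_le₀ (G.len_pos e) ?_⟩
  exact (hC ⟨⟨i, e⟩, rfl⟩).trans (le_max_left _ _)

lemma exists_len_le [Finite ι] : ∃ L > 0, ∀ i (e : G.Edge i), G.len e ≤ L := by
  obtain ⟨C, hC⟩ := (Set.finite_range fun e : Σ i, G.Edge i => G.len e.2).bddAbove
  exact ⟨max C 1, by positivity, fun i e => (hC ⟨⟨i, e⟩, rfl⟩).trans (le_max_left _ _)⟩

/-- The numbers `exp (-len e)` are the transition probabilities of a Markov chain on the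
vertices. -/
def IsMarkov : Prop := ∀ i, ∑ e : G.Edge i, Real.exp (-G.len e) = 1

/-- The average of `f` over one step of the Markov chain that starts in vertex `i` at time `t` and
runs backwards in time, by the length of the edge it traverses. -/
noncomputable def average (f : ι → ℝ → ℝ) (i : ι) (t : ℝ) : ℝ :=
  ∑ e : G.Edge i, Real.exp (-G.len e) * f (G.tgt e) (t - G.len e)

/-- A function of vertex and time bounded by its averages over one step of the Markov chain. -/
def IsSubharmonic (f : ι → ℝ → ℝ) : Prop := ∀ i t, f i t ≤ G.average f i t

variable {G} {f : ι → ℝ → ℝ}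

lemma average_exp_neg_mul (i : ι) (t : ℝ) :
    G.average (fun j y => Real.exp (-y) * f j y) i t =
      Real.exp (-t) * ∑ e : G.Edge i, f (G.tgt e) (t - G.len e) := by
  simp only [average, Finset.mul_sum, ← mul_assoc, ← Real.exp_add, neg_add_eq_sub, neg_sub,
    sub_sub_cancel_left]

lemma IsMarkov.two_le_card_edge (hG : G.IsMarkov) (i : ι) : 2 ≤ Fintype.card (G.Edge i) := by
  have hne : (Finset.univ : Finset (G.Edge i)).Nonempty := by
    by_contra! h
    simpa [h] using hG i
  have hlt : ∑ e : G.Edge i, Real.exp (-G.len e) < ∑ _e : G.Edge i, (1 : ℝ) :=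
    Finset.sum_lt_sum_of_nonempty hne fun e _ => by simpa using G.len_pos e
  rw [hG i] at hlt
  exact_mod_cast (by simpa using hlt : (1 : ℝ) < Fintype.card (G.Edge i))

lemma IsMarkov.average_le (hG : G.IsMarkov) {i : ι} {t C : ℝ}
    (h : ∀ e : G.Edge i, f (G.tgt e) (t - G.len e) ≤ C) : G.average f i t ≤ C :=
  calc G.average f i t ≤ ∑ e : G.Edge i, Real.exp (-G.len e) * C :=
        Finset.sum_le_sum fun e _ => mul_le_mul_of_nonneg_left (h e) (Real.exp_pos _).le
    _ = C := by rw [← Finset.sum_mul, hG i, one_mul]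

lemma IsSubharmonic.le_of_le_window [Finite ι] (hf : G.IsSubharmonic f) (hG : G.IsMarkov)
    {x L C : ℝ} (hL : ∀ i (e : G.Edge i), G.len e ≤ L)
    (hwin : ∀ i, ∀ t ∈ Set.Icc (x - L) x, f i t ≤ C) (i : ι) {t : ℝ} (ht : x - L ≤ t) :
    f i t ≤ C := by
  obtain ⟨δ, hδ, hδlen⟩ := G.exists_pos_le_len
  have hsteps : ∀ k : ℕ, ∀ i, ∀ t ∈ Set.Icc (x - L) (x + k * δ), f i t ≤ C := by
    intro k
    induction k with
    | zero => simpa using hwin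
    | succ k ih =>
      intro i t ht
      rcases le_or_gt t x with htx | htx
      · exact hwin i t ⟨ht.1, htx⟩
      · refine (hf i t).trans (hG.average_le fun e => ih _ _ ⟨?_, ?_⟩)
        · linarith [hL i e]
        · have hte := ht.2
          push_cast at hte
          linarith [hδlen i e]
  obtain ⟨k, hk⟩ := exists_nat_ge ((t - x) / δ)
  exact hsteps k i t ⟨ht, by linarith [(div_le_iff₀ hδ).1 hk]⟩

variable (G) in
/-- `G.PathLength i h s`: some directed path from `i` to `h` has total length `s`. -/
inductive PathLength : ι → ι → ℝ → Prop
  | nil (i : ι) : PathLength i i 0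
  | cons {i h : ι} {s : ℝ} (e : G.Edge i) (p : PathLength (G.tgt e) h s) :
      PathLength i h (G.len e + s)

lemma PathLength.trans {i j h : ι} {s t : ℝ} (hs : G.PathLength i j s) (ht : G.PathLength j h t) :
    G.PathLength i h (s + t) := by
  induction hs with
  | nil => simpa using ht
  | cons e _ ih => simpa only [add_assoc] using (ih ht).cons e

lemma PathLength.nonneg {i h : ι} {s : ℝ} (hs : G.PathLength i h s) : 0 ≤ s := by
  induction hs with
  | nil => rfl
  | cons e _ ih => linarith [G.len_pos e]

lemma IsSubharmonic.sub_le_exp_mul_of_edge (hf : G.IsSubharmonic f) (hG : G.IsMarkov)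
    {i : ι} {t B : ℝ} (hB : ∀ e : G.Edge i, f (G.tgt e) (t - G.len e) ≤ B) (e : G.Edge i) :
    B - f (G.tgt e) (t - G.len e) ≤ Real.exp (G.len e) * (B - f i t) := by
  have hsum : ∑ e : G.Edge i, Real.exp (-G.len e) * (B - f (G.tgt e) (t - G.len e)) ≤
      B - f i t := by
    simp only [mul_sub, Finset.sum_sub_distrib, ← Finset.sum_mul, hG i, one_mul]
    exact sub_le_sub_left (hf i t) B
  have hsingle := Finset.single_le_sum
    (f := fun e => Real.exp (-G.len e) * (B - f (G.tgt e) (t - G.len e)))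
    (fun e _ => mul_nonneg (Real.exp_pos _).le (sub_nonneg.2 (hB e))) (Finset.mem_univ e)
  rw [← inv_mul_le_iff₀ (Real.exp_pos _), ← Real.exp_neg]
  exact hsingle.trans hsum

lemma IsSubharmonic.sub_le_exp_mul_of_pathLength (hf : G.IsSubharmonic f) (hG : G.IsMarkov)
    {i h : ι} {s t B L : ℝ} (hL : ∀ i (e : G.Edge i), G.len e ≤ L) (hp : G.PathLength i h s)
    (hB : ∀ j y, t - s - L ≤ y → f j y ≤ B) :
    B - f h (t - s) ≤ Real.exp s * (B - f i t) := by
  induction hp generalizing t with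
  | nil => simp
  | @cons i h s e hp ih =>
    have htail := ih (t := t - G.len e) fun j y hy => hB j y (by linarith)
    have hedge := hf.sub_le_exp_mul_of_edge hG (t := t) (B := B) (fun e' => hB _ _ (by
      linarith [hL i e', hp.nonneg, G.len_pos e])) e
    calc B - f h (t - (G.len e + s)) = B - f h (t - G.len e - s) := by rw [sub_sub]
      _ ≤ Real.exp s * (B - f (G.tgt e) (t - G.len e)) := htail
      _ ≤ Real.exp s * (Real.exp (G.len e) * (B - f i t)) := by gcongr
      _ = Real.exp (G.len e + s) * (B - f i t) := by rw [Real.exp_add]; ring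

end MetricDigraph

lemma exists_limsup_iSup {ι β : Type*} [Finite ι] [Nonempty ι] {l : Filter β} [l.NeBot]
    {f : ι → β → ℝ} (hf₀ : ∀ i x, 0 ≤ f i x) {C : ℝ} (hfC : ∀ᶠ x in l, ∀ i, f i x ≤ C) :
    ∃ α : ℝ, (∀ b > α, ∀ᶠ x in l, ∀ i, f i x < b) ∧ ∀ b < α, ∃ᶠ x in l, ∃ i, b < f i x := by
  have hbdd : IsBoundedUnder (· ≤ ·) l fun x => ⨆ i, f i x :=
    ⟨C, eventually_map.2 (hfC.mono fun x hx => ciSup_le hx)⟩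
  have hcobdd : IsCoboundedUnder (· ≤ ·) l fun x => ⨆ i, f i x :=
    IsBoundedUnder.isCoboundedUnder_le ⟨0, eventually_map.2 (.of_forall fun x =>
      Real.iSup_nonneg fun i => hf₀ i x)⟩
  refine ⟨limsup (fun x => ⨆ i, f i x) l, fun b hb => ?_, fun b hb => ?_⟩
  · exact (eventually_lt_of_limsup_lt hb hbdd).mono fun x hx i =>
      (le_ciSup (Set.finite_range fun i => f i x).bddAbove i).trans_lt hx
  · exact (frequently_lt_of_lt_limsup hcobdd hb).mono fun x hx => exists_lt_of_lt_ciSup hx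

namespace MetricDigraph

variable {ι : Type*} (G : MetricDigraph ι)

/-- The lengths of the paths between any two vertices are asymptotically dense in `ℝ`: each
interval of a given length contains one of them as soon as it is far enough to the right. -/
def HasDensePathLengths : Prop :=
  ∀ ε > 0, ∀ i h, ∀ᶠ x in atTop, ∃ s ∈ Set.Icc x (x + ε), G.PathLength i h s

variable {G} [Finite ι] {f g : ι → ℝ → ℝ} {α : ℝ}

lemma IsSubharmonic.frequently_lt_along_paths (hf : G.IsSubharmonic f) (hG : G.IsMarkov)
    (hupper : ∀ b > α, ∀ᶠ t in atTop, ∀ i, f i t < b)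
    (hfreq : ∀ b < α, ∃ᶠ t in atTop, ∃ i, b < f i t) (S : ℝ) {b : ℝ} (hb : b < α) :
    ∃ᶠ t in atTop, ∃ i, ∀ h, ∀ s ≤ S, G.PathLength i h s → b < f h (t - s) := by
  obtain ⟨L, -, hL⟩ := G.exists_len_le
  set κ := (α - b) / (2 * Real.exp S) with hκ
  have hκ₀ : 0 < κ := div_pos (sub_pos.2 hb) (by positivity)
  obtain ⟨X, hX⟩ := eventually_atTop.1 (hupper (α + κ) (by linarith))
  refine ((hfreq (α - κ) (by linarith)).and_eventually (eventually_ge_atTop (X + S + L))).mono ?_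
  rintro t ⟨⟨i, hi⟩, ht⟩
  refine ⟨i, fun h s hs hp => ?_⟩
  have hdef := hf.sub_le_exp_mul_of_pathLength hG (B := α + κ) (t := t) hL hp
    fun j y hy => (hX y (by linarith) j).le
  have hsmall : Real.exp s * (α + κ - f i t) < α - b :=
    calc Real.exp s * (α + κ - f i t) < Real.exp s * (2 * κ) := by gcongr; linarith
      _ ≤ Real.exp S * (2 * κ) := by gcongr
      _ = α - b := by rw [hκ]; field_simp
  linarith

lemma IsSubharmonic.frequently_lt_on_window (hf : G.IsSubharmonic f) (hG : G.IsMarkov)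
    (hdense : G.HasDensePathLengths) (hf₀ : ∀ i t, 0 ≤ f i t)
    (hmono : ∀ i, Monotone fun t => Real.exp t * f i t)
    (hupper : ∀ b > α, ∀ᶠ t in atTop, ∀ i, f i t < b)
    (hfreq : ∀ b < α, ∃ᶠ t in atTop, ∃ i, b < f i t) (L : ℝ) {b : ℝ} (hb : b < α) :
    ∃ᶠ x in atTop, ∀ i, ∀ y ∈ Set.Icc (x - L) x, b < f i y := by
  obtain ⟨b', hbb', hb'⟩ := exists_between hb
  obtain ⟨ε, hε, hεb⟩ : ∃ ε > 0, b < Real.exp (-ε) * b' := by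
    have hcont : ContinuousAt (fun ε => Real.exp (-ε) * b') 0 := by fun_prop
    have hev := hcont.eventually_const_lt (show b < Real.exp (-0) * b' by simpa using hbb')
    obtain ⟨ε, hεb, hε⟩ := ((hev.filter_mono nhdsWithin_le_nhds).and
      (self_mem_nhdsWithin (s := Set.Ioi (0 : ℝ)))).exists
    exact ⟨ε, hε, hεb⟩
  obtain ⟨X, hX⟩ := eventually_atTop.1
    (eventually_all.2 fun i => eventually_all.2 fun h => hdense ε hε i h)
  have htimes := hf.frequently_lt_along_paths hG hupper hfreq (X + L + ε) hb'
  refine (tendsto_atTop_add_const_right _ (-X) tendsto_id).frequently (htimes.mono ?_)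
  rintro t ⟨i, hi⟩ h y ⟨hy₁, hy₂⟩
  simp only [id] at hy₁ hy₂
  obtain ⟨s, ⟨hs₁, hs₂⟩, hp⟩ := hX (t - y) (by linarith) i h
  have hts := hi h s (by linarith) hp
  have hmul : Real.exp (t - s) * f h (t - s) ≤ Real.exp y * f h y := hmono h (by linarith)
  calc b < Real.exp (-ε) * b' := hεb
    _ ≤ Real.exp (-ε) * f h (t - s) := by gcongr
    _ ≤ Real.exp (t - s - y) * f h (t - s) := by
      gcongr
      · exact hf₀ h _
      · linarith
    _ = Real.exp (-y) * (Real.exp (t - s) * f h (t - s)) := by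
      rw [← mul_assoc, ← Real.exp_add]; ring_nf
    _ ≤ Real.exp (-y) * (Real.exp y * f h y) := by gcongr
    _ = f h y := by rw [← mul_assoc, ← Real.exp_add]; simp

theorem IsSubharmonic.exists_tendsto [Nonempty ι] (hf : G.IsSubharmonic f) (hG : G.IsMarkov)
    (hdense : G.HasDensePathLengths) (hf₀ : ∀ i t, 0 ≤ f i t)
    (hmono : ∀ i, Monotone fun t => Real.exp t * f i t) {C : ℝ}
    (hfC : ∀ᶠ t in atTop, ∀ i, f i t ≤ C) (hg : G.IsSubharmonic (-g))
    (hfg : ∀ i, Tendsto (fun t => f i t - g i t) atTop (𝓝 0)) :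
    ∃ c, ∀ i, Tendsto (f i) atTop (𝓝 c) := by
  obtain ⟨α, hupper, hfreq⟩ := exists_limsup_iSup hf₀ hfC
  obtain ⟨L, -, hL⟩ := G.exists_len_le
  refine ⟨α, fun i => tendsto_order.2
    ⟨fun b hb => ?_, fun b hb => (hupper b hb).mono fun t ht => ht i⟩⟩
  obtain ⟨b₂, hbb₂, hb₂⟩ := exists_between hb
  obtain ⟨b₁, hbb₁, hb₁₂⟩ := exists_between hbb₂
  obtain ⟨X, hX⟩ := eventually_atTop.1 (eventually_all.2 fun i =>
    (hfg i).eventually_lt_const (sub_pos.2 hb₁₂))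
  obtain ⟨x, hwin, hx⟩ := ((hf.frequently_lt_on_window hG hdense hf₀ hmono hupper hfreq L
    hb₂).and_eventually (eventually_ge_atTop (X + L))).exists
  have hgwin : ∀ i, ∀ t ∈ Set.Icc (x - L) x, (-g) i t ≤ -b₁ := fun i t ht => by
    simp only [Pi.neg_apply]
    linarith [hwin i t ht, hX t (by linarith [ht.1]) i]
  have hfg' := (hfg i).eventually_const_lt (sub_neg.2 hbb₁)
  filter_upwards [hfg', eventually_ge_atTop (x - L)] with t ht htx
  have := hg.le_of_le_window hG hL hgwin i htx
  simp only [Pi.neg_apply] at this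
  linarith

end MetricDigraph

/-! ### Path counts -/

namespace MetricDigraph

variable {ι : Type*} [DecidableEq ι] (G : MetricDigraph ι)

/-- The number of paths from `i` to `h` with `m` edges and of length less than `t`. -/
noncomputable def edgePathCount (h : ι) : ℕ → ι → ℝ → ℝ
  | 0, i, t => if i = h ∧ 0 < t then 1 else 0
  | m + 1, i, t => ∑ e : G.Edge i, edgePathCount h m (G.tgt e) (t - G.len e)

/-- The number of paths from `i` to `h` of length less than `t`. -/
noncomputable def pathCount (h i : ι) (t : ℝ) : ℝ := ∑' m, G.edgePathCount h m i t

variable {G}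

lemma edgePathCount_nonneg (h : ι) (m : ℕ) (i : ι) (t : ℝ) : 0 ≤ G.edgePathCount h m i t := by
  induction m generalizing i t with
  | zero => simp only [edgePathCount]; split_ifs <;> norm_num
  | succ m ih => exact Finset.sum_nonneg fun e _ => ih _ _

lemma monotone_edgePathCount (h : ι) (m : ℕ) (i : ι) : Monotone (G.edgePathCount h m i) := by
  induction m generalizing i with
  | zero =>
    intro t t' htt'
    simp only [edgePathCount]
    split_ifs with h₁ h₂
    exacts [le_rfl, absurd ⟨h₁.1, h₁.2.trans_le htt'⟩ h₂, zero_le_one, le_rfl]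
  | succ m ih => exact fun t t' htt' => Finset.sum_le_sum fun e _ => ih _ (by linarith)

lemma edgePathCount_eq_zero {δ : ℝ} (hδ : ∀ i (e : G.Edge i), δ ≤ G.len e) (h : ι) {m : ℕ} {i : ι}
    {t : ℝ} (ht : t ≤ m * δ) : G.edgePathCount h m i t = 0 := by
  induction m generalizing i t with
  | zero => simp [edgePathCount, show ¬ 0 < t by simpa using ht]
  | succ m ih =>
    push_cast at ht
    exact Finset.sum_eq_zero fun e _ => ih (by linarith [hδ i e])

lemma pathCount_nonneg (h i : ι) (t : ℝ) : 0 ≤ G.pathCount h i t :=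
  tsum_nonneg fun m => edgePathCount_nonneg h m i t

lemma pathCount_of_nonpos (h i : ι) {t : ℝ} (ht : t ≤ 0) : G.pathCount h i t = 0 := by
  have hzero : ∀ m, G.edgePathCount h m i t = 0 := fun m =>
    edgePathCount_eq_zero (fun _ e => (G.len_pos e).le) h (by simpa using ht)
  simp [pathCount, hzero]

variable [Finite ι]

lemma summable_edgePathCount (h i : ι) (t : ℝ) : Summable fun m => G.edgePathCount h m i t := by
  obtain ⟨δ, hδ, hδlen⟩ := G.exists_pos_le_len
  obtain ⟨k, hk⟩ := exists_nat_ge (t / δ)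
  refine summable_of_hasFiniteSupport ((Set.finite_lt_nat k).subset fun m hm => ?_)
  by_contra hmk
  refine hm (edgePathCount_eq_zero hδlen h (((div_le_iff₀ hδ).1 hk).trans ?_))
  gcongr
  simpa using hmk

lemma monotone_pathCount (h i : ι) : Monotone (G.pathCount h i) := fun t t' htt' =>
  (summable_edgePathCount h i t).tsum_le_tsum (fun m => monotone_edgePathCount h m i htt')
    (summable_edgePathCount h i t')

/-- The renewal equation: a path is empty or begins with an edge. -/
lemma pathCount_eq (h i : ι) (t : ℝ) :
    G.pathCount h i t = (if i = h ∧ 0 < t then 1 else 0) +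
      ∑ e : G.Edge i, G.pathCount h (G.tgt e) (t - G.len e) := by
  simp only [pathCount]
  rw [(summable_edgePathCount h i t).tsum_eq_zero_add,
    ← Summable.tsum_finsetSum fun e _ => summable_edgePathCount h _ _]
  rfl

lemma isSubharmonic_neg_exp_neg_mul_pathCount (h : ι) :
    G.IsSubharmonic (-fun i t => Real.exp (-t) * G.pathCount h i t) := by
  intro i t
  have havg := average_exp_neg_mul (G := G) (f := G.pathCount h) i t
  have heq := pathCount_eq (G := G) h i t
  have hle : ∑ e : G.Edge i, G.pathCount h (G.tgt e) (t - G.len e) ≤ G.pathCount h i t := by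
    rw [heq]; split_ifs <;> simp
  simp only [average, Pi.neg_apply, mul_neg, Finset.sum_neg_distrib, neg_le_neg_iff] at havg ⊢
  rw [havg]
  gcongr

/-- The added `1` makes up for the inhomogeneous term of the renewal equation, because every vertex
emits at least two edges. -/
lemma isSubharmonic_exp_neg_mul_pathCount_add_one (hG : G.IsMarkov) (h : ι) :
    G.IsSubharmonic fun i t => Real.exp (-t) * (G.pathCount h i t + 1) := by
  intro i t
  rw [average_exp_neg_mul (f := fun i t => G.pathCount h i t + 1)]
  refine mul_le_mul_of_nonneg_left ?_ (Real.exp_pos _).le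
  have hcard : (2 : ℝ) ≤ Fintype.card (G.Edge i) := mod_cast hG.two_le_card_edge i
  rw [pathCount_eq, Finset.sum_add_distrib]
  simp only [Finset.sum_const, Finset.card_univ, nsmul_eq_mul, mul_one]
  split_ifs <;> linarith

lemma exists_forall_exp_neg_mul_pathCount_add_one_le (hG : G.IsMarkov) (h : ι) :
    ∃ C, ∀ i, ∀ t ≥ 0, Real.exp (-t) * (G.pathCount h i t + 1) ≤ C := by
  obtain ⟨L, hL₀, hL⟩ := G.exists_len_le
  have hwin : ∀ i, ∀ t ∈ Set.Icc (0 - L) 0,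
      Real.exp (-t) * (G.pathCount h i t + 1) ≤ Real.exp L := fun i t ht => by
    rw [pathCount_of_nonpos h i ht.2, zero_add, mul_one]
    exact Real.exp_le_exp.2 (by linarith [ht.1])
  exact ⟨Real.exp L, fun i t ht =>
    (isSubharmonic_exp_neg_mul_pathCount_add_one hG h).le_of_le_window hG hL hwin i (by linarith)⟩

theorem exists_tendsto_exp_neg_mul_pathCount [Nonempty ι] (hG : G.IsMarkov)
    (hdense : G.HasDensePathLengths) (h : ι) :
    ∃ c, ∀ i, Tendsto (fun t => Real.exp (-t) * G.pathCount h i t) atTop (𝓝 c) := by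
  have hdiff : ∀ i, Tendsto (fun t => Real.exp (-t) * (G.pathCount h i t + 1) -
      Real.exp (-t) * G.pathCount h i t) atTop (𝓝 0) := fun i => by
    simpa only [mul_add, mul_one, add_sub_cancel_left] using Real.tendsto_exp_neg_atTop_nhds_zero
  obtain ⟨C, hC⟩ := exists_forall_exp_neg_mul_pathCount_add_one_le hG h
  have hmono : ∀ i, Monotone fun t => Real.exp t * (Real.exp (-t) * (G.pathCount h i t + 1)) :=
    fun i => by
      simpa only [← mul_assoc, ← Real.exp_add, add_neg_cancel, Real.exp_zero, one_mul] using
        (monotone_pathCount h i).add_const 1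
  obtain ⟨c, hc⟩ := (isSubharmonic_exp_neg_mul_pathCount_add_one hG h).exists_tendsto hG hdense
    (fun i t => mul_nonneg (Real.exp_pos _).le (add_nonneg (pathCount_nonneg h i t) one_pos.le))
    hmono ((eventually_ge_atTop 0).mono fun t ht i => hC i t ht)
    (isSubharmonic_neg_exp_neg_mul_pathCount h) hdiff
  exact ⟨c, fun i => by simpa using (hc i).sub (hdiff i)⟩

end MetricDigraph

/-! ### Density of path lengths -/

lemma exists_sub_eq_of_mem_closure {A : Type*} [AddCommGroup A] {S : AddSubmonoid A} {x : A}
    (hx : x ∈ AddSubgroup.closure (S : Set A)) : ∃ u ∈ S, ∃ v ∈ S, u - v = x := by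
  induction hx using AddSubgroup.closure_induction with
  | mem x hx => exact ⟨x, hx, 0, S.zero_mem, sub_zero x⟩
  | zero => exact ⟨0, S.zero_mem, 0, S.zero_mem, sub_zero 0⟩
  | add x y _ _ hx hy =>
    obtain ⟨u, hu, v, hv, rfl⟩ := hx
    obtain ⟨u', hu', v', hv', rfl⟩ := hy
    exact ⟨u + u', S.add_mem hu hu', v + v', S.add_mem hv hv', add_sub_add_comm u u' v v'⟩
  | neg x _ hx =>
    obtain ⟨u, hu, v, hv, rfl⟩ := hx
    exact ⟨v, hv, u, hu, (neg_sub u v).symm⟩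

/-- If `δ = u - v` with `u, v ∈ S` and `K * δ ≥ b`, then the elements
`(K - k) * v + k * u + r * b = K * v + k * δ + r * b` of `S` with `k ≤ K` are `δ`-dense to the right
of `K * v`. -/
lemma eventually_exists_mem_Icc_of_dense_closure {S : AddSubmonoid ℝ}
    (hS : Dense (AddSubgroup.closure (S : Set ℝ) : Set ℝ)) {b : ℝ} (hbS : b ∈ S) (hb : 0 < b)
    {ε : ℝ} (hε : 0 < ε) : ∀ᶠ x in atTop, ∃ s ∈ S, s ∈ Set.Icc x (x + ε) := by
  obtain ⟨δ, hδS, hδ₀, hδε⟩ := hS.exists_between hε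
  obtain ⟨u, hu, v, hv, rfl⟩ := exists_sub_eq_of_mem_closure hδS
  set K := ⌈b / (u - v)⌉₊
  filter_upwards [eventually_ge_atTop (K * v)] with x hx
  have hy : 0 ≤ (x - K * v) / b := div_nonneg (sub_nonneg.2 hx) hb.le
  set r := ⌊(x - K * v) / b⌋₊
  have hr₁ : r * b ≤ x - K * v := (le_div_iff₀ hb).1 (Nat.floor_le hy)
  have hr₂ : x - K * v < (r + 1) * b := (div_lt_iff₀ hb).1 (Nat.lt_floor_add_one _)
  set k := ⌈(x - K * v - r * b) / (u - v)⌉₊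
  have hk₁ : x - K * v - r * b ≤ k * (u - v) := (div_le_iff₀ hδ₀).1 (Nat.le_ceil _)
  have hk₂ : k * (u - v) < x - K * v - r * b + (u - v) := by
    have := Nat.ceil_lt_add_one (div_nonneg (sub_nonneg.2 hr₁) hδ₀.le)
    rwa [div_add_one hδ₀.ne', lt_div_iff₀ hδ₀] at this
  have hkK : k ≤ K := Nat.ceil_mono (div_le_div_of_nonneg_right (by linarith) hδ₀.le)
  refine ⟨(K - k) • v + k • u + r • b, S.add_mem (S.add_mem (S.nsmul_mem hv _)
    (S.nsmul_mem hu k)) (S.nsmul_mem hbS r), ?_⟩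
  simp only [nsmul_eq_mul, Nat.cast_sub hkK, Set.mem_Icc]
  constructor <;> linarith

namespace MetricDigraph

variable {ι : Type*} (G : MetricDigraph ι)

/-- The lengths of the closed paths through `i`. -/
def loopLengths (i : ι) : AddSubmonoid ℝ where
  carrier := {s | G.PathLength i i s}
  zero_mem' := .nil i
  add_mem' := PathLength.trans

variable {G}

lemma hasDensePathLengths_of_irrational (hconn : ∀ i h, ∃ s, G.PathLength i h s) {i j : ι} {a b : ℝ}
    (ha : a ∈ G.loopLengths i) (hb : b ∈ G.loopLengths j) (hb₀ : 0 < b)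
    (hab : Irrational (a / b)) : G.HasDensePathLengths := by
  intro ε hε i₀ h₀
  obtain ⟨s₁, hs₁⟩ := hconn i₀ i
  obtain ⟨s₂, hs₂⟩ := hconn i j
  obtain ⟨s₃, hs₃⟩ := hconn j h₀
  have hbS : b ∈ G.loopLengths i ⊔ G.loopLengths j := AddSubmonoid.mem_sup_right hb
  have hpair : ({a, b} : Set ℝ) ⊆ (G.loopLengths i ⊔ G.loopLengths j : AddSubmonoid ℝ) :=
    Set.pair_subset (AddSubmonoid.mem_sup_left ha) hbS
  have hdense : Dense (AddSubgroup.closure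
      ((G.loopLengths i ⊔ G.loopLengths j : AddSubmonoid ℝ) : Set ℝ) : Set ℝ) :=
    (dense_addSubgroupClosure_pair_iff.2 hab).mono (AddSubgroup.closure_mono hpair)
  have hev := eventually_exists_mem_Icc_of_dense_closure hdense hbS hb₀ hε
  filter_upwards [(tendsto_atTop_add_const_right _ (-(s₁ + s₂ + s₃)) tendsto_id).eventually hev]
  rintro x ⟨s, hs, hsx⟩
  obtain ⟨u, hu, v, hv, rfl⟩ := AddSubmonoid.mem_sup.1 hs
  refine ⟨s₁ + (u + (s₂ + (v + s₃))), ?_, hs₁.trans (PathLength.trans hu (hs₂.trans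
    (PathLength.trans hv hs₃)))⟩
  simp only [id, Set.mem_Icc] at hsx ⊢
  constructor <;> linarith

end MetricDigraph

/-! ### Limits of path and leaf counts -/

lemma tendsto_integral_sub_self {g : ℝ → ℝ} (hg : ∀ a b, IntervalIntegrable g volume a b) {c : ℝ}
    (hc : Tendsto g atTop (𝓝 c)) (l : ℝ) :
    Tendsto (fun T => ∫ t in (T - l)..T, g t) atTop (𝓝 (c * l)) := by
  rw [Metric.tendsto_atTop]
  intro ε hε
  obtain ⟨X, hX⟩ := Metric.tendsto_atTop.1 hc (ε / (|l| + 1)) (by positivity)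
  refine ⟨X + |l|, fun T hT => ?_⟩
  have hint : (∫ t in (T - l)..T, g t) - c * l = ∫ t in (T - l)..T, (g t - c) := by
    rw [intervalIntegral.integral_sub (hg _ _) (by simp)]
    simp [mul_comm]
  have hclose : ∀ t ∈ Set.uIoc (T - l) T, ‖g t - c‖ ≤ ε / (|l| + 1) := fun t ht => by
    have hXt : X ≤ t := by
      have : min (T - l) T < t := ht.1
      have := le_abs_self l
      have := abs_nonneg l
      rcases min_lt_iff.1 ‹min (T - l) T < t› with h | h <;> linarith
    exact (hX t hXt).le
  calc dist (∫ t in (T - l)..T, g t) (c * l) = ‖∫ t in (T - l)..T, (g t - c)‖ := by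
        rw [dist_eq_norm, hint]
    _ ≤ ε / (|l| + 1) * |T - (T - l)| :=
        intervalIntegral.norm_integral_le_of_norm_le_const hclose
    _ < ε := by
        rw [sub_sub_cancel, div_mul_eq_mul_div, div_lt_iff₀ (by positivity)]
        linarith

namespace MetricDigraph

section MeanLength

variable {ι : Type*} [Fintype ι] {G : MetricDigraph ι}

variable (G) in
/-- The mean length of an edge in the Markov chain, with respect to a measure `q` on the
vertices. -/
noncomputable def meanLength (q : ι → ℝ) : ℝ :=
  ∑ i, q i * ∑ e : G.Edge i, Real.exp (-G.len e) * G.len e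

lemma meanLength_pos [Nonempty ι] (hG : G.IsMarkov) {q : ι → ℝ} (hq : ∀ i, 0 < q i) :
    0 < G.meanLength q := by
  refine Finset.sum_pos (fun i _ => mul_pos (hq i) (Finset.sum_pos
    (fun e _ => mul_pos (Real.exp_pos _) (G.len_pos e)) ?_)) Finset.univ_nonempty
  rw [Finset.univ_nonempty_iff, ← Fintype.card_pos_iff]
  exact zero_lt_two.trans_le (hG.two_le_card_edge i)

end MeanLength

variable {ι : Type*} [DecidableEq ι] {G : MetricDigraph ι}

variable (G) in
/-- The transition matrix of the Markov chain on the vertices. -/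
noncomputable def transitionMatrix : Matrix ι ι ℝ :=
  Matrix.of fun i j => ∑ e : G.Edge i, if G.tgt e = j then Real.exp (-G.len e) else 0

lemma transitionMatrix_mulVec [Fintype ι] (f : ι → ℝ) (i : ι) :
    (G.transitionMatrix.mulVec f) i = ∑ e : G.Edge i, Real.exp (-G.len e) * f (G.tgt e) := by
  simp only [Matrix.mulVec, dotProduct, transitionMatrix, Matrix.of_apply, Finset.sum_mul, ite_mul,
    zero_mul]
  rw [Finset.sum_comm]
  simp

section DiscountedPathCount

variable (G) in
/-- The integral over `[0, T]` of the number of paths from `i` to `h`, discounted by `exp (-t)`. -/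
noncomputable def discountedPathCount (h i : ι) (T : ℝ) : ℝ :=
  ∫ t in (0 : ℝ)..T, Real.exp (-t) * G.pathCount h i t

lemma discountedPathCount_of_nonpos (h i : ι) {T : ℝ} (hT : T ≤ 0) :
    G.discountedPathCount h i T = 0 := by
  rw [discountedPathCount, intervalIntegral.integral_congr (g := fun _ => 0),
    intervalIntegral.integral_zero]
  intro t ht
  rw [Set.uIcc_of_ge hT] at ht
  simp [pathCount_of_nonpos h i ht.2]

variable [Finite ι]

lemma intervalIntegrable_exp_neg_mul_pathCount (h i : ι) (a b : ℝ) :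
    IntervalIntegrable (fun t => Real.exp (-t) * G.pathCount h i t) volume a b :=
  (monotone_pathCount h i).intervalIntegrable.continuousOn_mul (by fun_prop)

lemma integral_exp_neg_mul_pathCount_sub (h i : ι) (T l : ℝ) :
    ∫ t in (T - l)..T, Real.exp (-t) * G.pathCount h i t =
      G.discountedPathCount h i T - G.discountedPathCount h i (T - l) :=
  (intervalIntegral.integral_interval_sub_left
    (intervalIntegrable_exp_neg_mul_pathCount h i _ _)
    (intervalIntegrable_exp_neg_mul_pathCount h i _ _)).symm

lemma integral_comp_sub_right_eq_discountedPathCount (h i : ι) (T : ℝ) {l : ℝ} (hl : 0 ≤ l) :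
    ∫ t in (0 : ℝ)..T, Real.exp (-(t - l)) * G.pathCount h i (t - l) =
      G.discountedPathCount h i (T - l) := by
  have hshift := integral_exp_neg_mul_pathCount_sub (G := G) h i (T - l) T
  rw [sub_right_comm, sub_self, zero_sub, discountedPathCount_of_nonpos h i (neg_nonpos.2 hl),
    sub_zero] at hshift
  rw [← hshift, intervalIntegral.integral_comp_sub_right fun t => Real.exp (-t) * G.pathCount h i t,
    zero_sub]

lemma discountedPathCount_eq (h i : ι) {T : ℝ} (hT : 0 ≤ T) :
    G.discountedPathCount h i T = (if i = h then 1 - Real.exp (-T) else 0) +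
      G.average (G.discountedPathCount h) i T := by
  have hrenewal : ∀ t ∈ Set.Ioc 0 T, Real.exp (-t) * G.pathCount h i t =
      (if i = h then Real.exp (-t) else 0) + ∑ e : G.Edge i, Real.exp (-G.len e) *
        (Real.exp (-(t - G.len e)) * G.pathCount h (G.tgt e) (t - G.len e)) := fun t ht => by
    have havg := average_exp_neg_mul (G := G) (f := G.pathCount h) i t
    rw [average] at havg
    rw [havg, pathCount_eq, mul_add]
    simp [ht.1]
  have hint : ∀ e : G.Edge i, IntervalIntegrable (fun t => Real.exp (-G.len e) *
      (Real.exp (-(t - G.len e)) * G.pathCount h (G.tgt e) (t - G.len e))) volume 0 T := fun e => by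
    simpa using ((intervalIntegrable_exp_neg_mul_pathCount h (G.tgt e) (0 - G.len e)
      (T - G.len e)).comp_sub_right (G.len e)).const_mul (Real.exp (-G.len e))
  have hint₀ : IntervalIntegrable (fun t => if i = h then Real.exp (-t) else 0) volume 0 T := by
    split_ifs <;> exact Continuous.intervalIntegrable (by fun_prop) _ _
  rw [discountedPathCount, intervalIntegral.integral_congr_ae (.of_forall fun t ht =>
      hrenewal t (by rwa [Set.uIoc_of_le hT] at ht)),
    intervalIntegral.integral_add hint₀ (by
      simpa only [Finset.sum_fn] using IntervalIntegrable.sum _ fun e _ => hint e),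
    intervalIntegral.integral_finsetSum fun e _ => hint e]
  congr 1
  · split_ifs <;> simp
  · exact Finset.sum_congr rfl fun e _ => by
      rw [intervalIntegral.integral_const_mul, integral_comp_sub_right_eq_discountedPathCount _ _ _
        (G.len_pos e).le]

end DiscountedPathCount

variable [Fintype ι]

lemma sum_mul_integral_eq {q : ι → ℝ} (hq : Matrix.vecMul q G.transitionMatrix = q) (h : ι)
    {T : ℝ} (hT : 0 ≤ T) :
    ∑ i, q i * ∑ e : G.Edge i, Real.exp (-G.len e) *
      ∫ t in (T - G.len e)..T, Real.exp (-t) * G.pathCount h (G.tgt e) t =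
        q h * (1 - Real.exp (-T)) := by
  have hstat := Matrix.dotProduct_mulVec q G.transitionMatrix (G.discountedPathCount h · T)
  rw [hq] at hstat
  simp only [dotProduct, transitionMatrix_mulVec] at hstat
  have hrenewal : ∑ i, q i * G.discountedPathCount h i T = q h * (1 - Real.exp (-T)) +
      ∑ i, q i * G.average (G.discountedPathCount h) i T := by
    simp [discountedPathCount_eq h _ hT, mul_add, Finset.sum_add_distrib]
  simp only [integral_exp_neg_mul_pathCount_sub, mul_sub, Finset.sum_sub_distrib, hstat, hrenewal]
  simp [average]

lemma mul_meanLength_eq {h : ι} {c : ℝ}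
    (hc : ∀ i, Tendsto (fun t => Real.exp (-t) * G.pathCount h i t) atTop (𝓝 c)) {q : ι → ℝ}
    (hq : Matrix.vecMul q G.transitionMatrix = q) : c * G.meanLength q = q h := by
  have hleft : Tendsto (fun T => ∑ i, q i * ∑ e : G.Edge i, Real.exp (-G.len e) *
      ∫ t in (T - G.len e)..T, Real.exp (-t) * G.pathCount h (G.tgt e) t) atTop
      (𝓝 (∑ i, q i * ∑ e : G.Edge i, Real.exp (-G.len e) * (c * G.len e))) :=
    tendsto_finsetSum _ fun i _ => .const_mul _ <| tendsto_finsetSum _ fun e _ => .const_mul _ <|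
      tendsto_integral_sub_self (intervalIntegrable_exp_neg_mul_pathCount h _) (hc _) _
  have hright : Tendsto (fun T => q h * (1 - Real.exp (-T))) atTop (𝓝 (q h * (1 - 0))) :=
    (Real.tendsto_exp_neg_atTop_nhds_zero.const_sub 1).const_mul _
  have hlim := tendsto_nhds_unique
    (hleft.congr' ((eventually_ge_atTop 0).mono fun T hT => sum_mul_integral_eq hq h hT)) hright
  rw [sub_zero, mul_one] at hlim
  simp only [← hlim, meanLength, Finset.mul_sum, mul_left_comm c]

theorem tendsto_exp_neg_mul_pathCount (hG : G.IsMarkov) (hdense : G.HasDensePathLengths)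
    {q : ι → ℝ} (hq : Matrix.vecMul q G.transitionMatrix = q) (hq₀ : G.meanLength q ≠ 0) (h i : ι) :
    Tendsto (fun t => Real.exp (-t) * G.pathCount h i t) atTop (𝓝 (q h / G.meanLength q)) := by
  have : Nonempty ι := ⟨i⟩
  obtain ⟨c, hc⟩ := exists_tendsto_exp_neg_mul_pathCount hG hdense h
  rw [← mul_meanLength_eq hc hq, mul_div_cancel_right₀ _ hq₀]
  exact hc i

variable (G) in
/-- The number of leaves of type `j` when the tree of all paths from `i` is cut at time `t`, that
is, of paths from `i` to `j` of length at least `t` whose length without their last edge is less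
than `t`. For `t ≤ 0` the tree is cut at its root. -/
noncomputable def leafCount (j i : ι) (t : ℝ) : ℝ :=
  (if i = j ∧ t ≤ 0 then 1 else 0) + ∑ h, ∑ e : G.Edge h,
    if G.tgt e = j then G.pathCount h i t - G.pathCount h i (t - G.len e) else 0

lemma leafCount_of_nonpos (j i : ι) {t : ℝ} (ht : t ≤ 0) :
    G.leafCount j i t = if i = j then 1 else 0 := by
  have hpath : ∀ (h : ι) (e : G.Edge h), G.pathCount h i (t - G.len e) = 0 := fun h e =>
    pathCount_of_nonpos h i (by linarith [G.len_pos e])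
  simp [leafCount, hpath, pathCount_of_nonpos _ i ht, ht]

lemma leafCount_eq_sum (j i : ι) {t : ℝ} (ht : 0 < t) :
    G.leafCount j i t = ∑ e : G.Edge i, G.leafCount j (G.tgt e) (t - G.len e) := by
  have hrenewal : ∀ (h : ι) (e : G.Edge h), G.pathCount h i t - G.pathCount h i (t - G.len e) =
      (if i = h ∧ t ≤ G.len e then 1 else 0) + ∑ e' : G.Edge i,
        (G.pathCount h (G.tgt e') (t - G.len e') -
          G.pathCount h (G.tgt e') (t - G.len e' - G.len e)) := fun h e => by
    rw [pathCount_eq h i t, pathCount_eq h i (t - G.len e), Finset.sum_sub_distrib]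
    simp only [sub_right_comm t, sub_pos, ht, and_true, ← not_le (a := t)]
    split_ifs <;> grind
  have hroot : ∑ h, ∑ e : G.Edge h, (if G.tgt e = j then
      if i = h ∧ t ≤ G.len e then (1 : ℝ) else 0 else 0) =
      ∑ e : G.Edge i, if G.tgt e = j ∧ t - G.len e ≤ 0 then 1 else 0 := by
    rw [Finset.sum_eq_single i (fun h _ hh => by simp [hh.symm]) (by simp)]
    simp [ite_and]
  have hcomm : ∑ h, ∑ e : G.Edge h, (if G.tgt e = j then ∑ e' : G.Edge i,
        (G.pathCount h (G.tgt e') (t - G.len e') -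
          G.pathCount h (G.tgt e') (t - G.len e' - G.len e)) else 0) =
      ∑ e' : G.Edge i, ∑ h, ∑ e : G.Edge h, if G.tgt e = j then
        G.pathCount h (G.tgt e') (t - G.len e') -
          G.pathCount h (G.tgt e') (t - G.len e' - G.len e) else 0 := by
    simp only [Finset.ite_sum_zero]
    exact (Finset.sum_congr rfl fun h _ => Finset.sum_comm).trans Finset.sum_comm
  simp only [leafCount, hrenewal, ite_add_zero, Finset.sum_add_distrib, hroot, hcomm, ht.not_ge,
    and_false, if_false, zero_add]

lemma tendsto_exp_neg_mul_leafCount {c : ι → ℝ} {i : ι}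
    (hc : ∀ h, Tendsto (fun t => Real.exp (-t) * G.pathCount h i t) atTop (𝓝 (c h))) (j : ι) :
    Tendsto (fun t => Real.exp (-t) * G.leafCount j i t) atTop
      (𝓝 (∑ h, (∑ e : G.Edge h, if G.tgt e = j then 1 - Real.exp (-G.len e) else 0) * c h)) := by
  have hdelay : ∀ h l, Tendsto (fun t => Real.exp (-t) * G.pathCount h i (t - l)) atTop
      (𝓝 (Real.exp (-l) * c h)) := fun h l => by
    have hcomp := ((hc h).comp (tendsto_atTop_add_const_right _ (-l) tendsto_id)).const_mul
      (Real.exp (-l))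
    refine hcomp.congr fun t => ?_
    simp only [Function.comp, id, ← mul_assoc, ← Real.exp_add]
    ring_nf
  have hsum : Tendsto (fun t => ∑ h, ∑ e : G.Edge h, if G.tgt e = j then
        Real.exp (-t) * G.pathCount h i t - Real.exp (-t) * G.pathCount h i (t - G.len e) else 0)
      atTop (𝓝 (∑ h, ∑ e : G.Edge h,
        if G.tgt e = j then c h - Real.exp (-G.len e) * c h else 0)) :=
    tendsto_finsetSum _ fun h _ => tendsto_finsetSum _ fun e _ => by
      split_ifs
      exacts [(hc h).sub (hdelay h _), tendsto_const_nhds]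
  have hlim : ∑ h, (∑ e : G.Edge h, if G.tgt e = j then 1 - Real.exp (-G.len e) else 0) * c h =
      ∑ h, ∑ e : G.Edge h, if G.tgt e = j then c h - Real.exp (-G.len e) * c h else 0 := by
    simp only [Finset.sum_mul, ite_mul, zero_mul, sub_mul, one_mul]
  rw [hlim]
  refine hsum.congr' ((eventually_gt_atTop 0).mono fun t ht => ?_)
  simp [leafCount, ht.not_ge, Finset.mul_sum, mul_sub]

end MetricDigraph

/-! ### The adjugate of `1 - M` for a stochastic matrix `M` -/

section Stochastic

open Matrix

variable {ι : Type*}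

lemma isIrreducible_of_transGen {M : Matrix ι ι ℝ} (hM : ∀ i j, 0 ≤ M i j)
    (hconn : ∀ i j, Relation.TransGen (fun a b => 0 < M a b) i j) : M.IsIrreducible := by
  let : Quiver ι := M.toQuiver
  refine ⟨hM, fun i j => ?_⟩
  induction hconn i j with
  | single hab => exact ⟨Quiver.Hom.toPath ⟨hab⟩, one_pos⟩
  | tail _ hbc ih => exact ⟨ih.choose.cons ⟨hbc⟩, Nat.succ_pos _⟩

variable [Fintype ι]

lemma trace_mul_of_rows_eq {N : Matrix ι ι ℝ} (M : Matrix ι ι ℝ) {q : ι → ℝ}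
    (hN : ∀ a, N a = q) : (N * M).trace = ∑ b, q b * ∑ a, M b a := by
  simp only [trace, diag_apply, mul_apply, hN, Finset.mul_sum]
  exact Finset.sum_comm

variable [DecidableEq ι] {M : Matrix ι ι ℝ}

lemma le_pow_mulVec_of_le_mulVec (hM : M ∈ rowStochastic ℝ ι) {v : ι → ℝ} (hv : v ≤ M *ᵥ v)
    (k : ℕ) : v ≤ (M ^ k) *ᵥ v := by
  induction k with
  | zero => simp
  | succ k ih =>
    have hstep : 0 ≤ (M ^ k) *ᵥ (M *ᵥ v - v) := fun i =>
      nonneg_mulVec_of_mem_rowStochastic (pow_mem hM k) (fun j => sub_nonneg.2 (hv j)) i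
    rw [mulVec_sub, sub_nonneg, mulVec_mulVec, ← pow_succ] at hstep
    exact ih.trans hstep

/-- A subharmonic function of an irreducible Markov chain is constant, since at a maximum `a` it is
equal to its average under `M ^ k` for every `k`. -/
lemma eq_of_le_mulVec (hM : M ∈ rowStochastic ℝ ι) (hirr : M.IsIrreducible) {v : ι → ℝ}
    (hv : v ≤ M *ᵥ v) (i j : ι) : v i = v j := by
  have : Nonempty ι := ⟨i⟩
  obtain ⟨a, ha⟩ := Finite.exists_max v
  suffices hmax : ∀ b, v b = v a by rw [hmax i, hmax j]
  intro b
  obtain ⟨k, -, hk⟩ := (isIrreducible_iff_exists_pow_pos hirr.nonneg).1 hirr a b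
  have hMk := pow_mem hM k
  have hdefect : ∑ c, (M ^ k) a c * (v a - v c) ≤ 0 := by
    simp only [mul_sub, Finset.sum_sub_distrib, ← Finset.sum_mul, sum_row_of_mem_rowStochastic hMk,
      one_mul]
    exact sub_nonpos.2 (le_pow_mulVec_of_le_mulVec hM hv k a)
  have hnonneg : ∀ c ∈ Finset.univ, 0 ≤ (M ^ k) a c * (v a - v c) := fun c _ =>
    mul_nonneg (nonneg_of_mem_rowStochastic hMk) (sub_nonneg.2 (ha c))
  have hzero := (Finset.sum_eq_zero_iff_of_nonneg hnonneg).1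
    (hdefect.antisymm (Finset.sum_nonneg hnonneg)) b (Finset.mem_univ b)
  linarith [(mul_eq_zero.1 hzero).resolve_left hk.ne']

lemma det_one_sub_eq_zero [Nonempty ι] (hM : M ∈ rowStochastic ℝ ι) : (1 - M).det = 0 :=
  exists_mulVec_eq_zero_iff.1 ⟨1, one_ne_zero, by
    rw [sub_mulVec, one_mulVec, one_vecMul_of_mem_rowStochastic hM, sub_self]⟩

lemma adjugate_one_sub_row_eq (hM : M ∈ rowStochastic ℝ ι) (hirr : M.IsIrreducible) (a b : ι) :
    (1 - M).adjugate a = (1 - M).adjugate b := by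
  have : Nonempty ι := ⟨a⟩
  have hmul : M * (1 - M).adjugate = (1 - M).adjugate := by
    have := mul_adjugate (1 - M)
    rw [det_one_sub_eq_zero hM, zero_smul, Matrix.sub_mul, one_mul, sub_eq_zero] at this
    exact this.symm
  ext c
  refine eq_of_le_mulVec hM hirr (v := fun a => (1 - M).adjugate a c) (fun d => ?_) a b
  exact (congrFun (congrFun hmul d) c).ge

lemma adjugate_one_sub_row_vecMul (hM : M ∈ rowStochastic ℝ ι) (a : ι) :
    (1 - M).adjugate a ᵥ* M = (1 - M).adjugate a := by
  have : Nonempty ι := ⟨a⟩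
  have hmul := adjugate_mul (1 - M)
  rw [det_one_sub_eq_zero hM, zero_smul, Matrix.mul_sub, mul_one, sub_eq_zero] at hmul
  exact (congrFun hmul a).symm

/-- If `v` is in the kernel of `1 - x • M` with row `h` replaced by the unit vector, then `|v|` is
subharmonic, hence constant, and vanishes at `h`. -/
lemma det_updateRow_one_sub_smul_ne_zero (hM : M ∈ rowStochastic ℝ ι) (hirr : M.IsIrreducible)
    (h : ι) {x : ℝ} (hx : x ∈ Set.Icc 0 1) :
    ((1 - x • M).updateRow h (Pi.single h 1)).det ≠ 0 := by
  intro hdet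
  obtain ⟨v, hv₀, hv⟩ := exists_mulVec_eq_zero_iff.2 hdet
  have hvh : v h = 0 := by simpa [mulVec, dotProduct, Pi.single_apply] using congrFun hv h
  have hva : ∀ a ≠ h, v a = x * ∑ b, M a b * v b := fun a ha => by
    have hrow : ((1 - x • M) *ᵥ v) a = 0 := by
      simpa only [mulVec, updateRow_ne ha, Pi.zero_apply] using congrFun hv a
    rw [sub_mulVec, one_mulVec, smul_mulVec] at hrow
    exact sub_eq_zero.1 hrow
  have habs : |v| ≤ M *ᵥ |v| := fun a => by
    rcases eq_or_ne a h with rfl | ha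
    · rw [Pi.abs_apply, hvh, abs_zero]
      exact nonneg_mulVec_of_mem_rowStochastic hM (fun j => abs_nonneg (v j)) a
    · calc |v a| = x * |∑ b, M a b * v b| := by rw [hva a ha, abs_mul, abs_of_nonneg hx.1]
        _ ≤ |∑ b, M a b * v b| := mul_le_of_le_one_left (abs_nonneg _) hx.2
        _ ≤ ∑ b, |M a b * v b| := Finset.abs_sum_le_sum_abs _ _
        _ = ∑ b, M a b * |v b| := by
          simp only [abs_mul, abs_of_nonneg (nonneg_of_mem_rowStochastic hM)]
  refine hv₀ (funext fun a => abs_eq_zero.1 ?_)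
  have hconst := eq_of_le_mulVec hM hirr habs a h
  rwa [Pi.abs_apply, Pi.abs_apply, hvh, abs_zero] at hconst

/-- The diagonal cofactor at `h` is the value at `x = 1` of a determinant that equals `1` at `x = 0`
and has no zero in between. -/
lemma adjugate_one_sub_pos (hM : M ∈ rowStochastic ℝ ι) (hirr : M.IsIrreducible) (a h : ι) :
    0 < (1 - M).adjugate a h := by
  rw [adjugate_one_sub_row_eq hM hirr a h, adjugate_apply]
  set D : ℝ → ℝ := fun x => ((1 - x • M).updateRow h (Pi.single h 1)).det with hD
  have hcont : Continuous D :=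
    ((by fun_prop : Continuous fun x : ℝ => 1 - x • M).matrix_updateRow h
      continuous_const).matrix_det
  have hD₀ : D 0 = 1 := by
    have hrow : Pi.single h 1 = (1 : Matrix ι ι ℝ) h := funext fun j => one_eq_pi_single.symm
    simp only [hD, zero_smul, sub_zero, hrow, updateRow_eq_self, det_one]
  suffices 0 < D 1 by simpa [hD] using this
  by_contra! hD₁
  obtain ⟨x, hx, hx₀⟩ := intermediate_value_Icc' zero_le_one hcont.continuousOn
    (show (0 : ℝ) ∈ Set.Icc (D 1) (D 0) from ⟨hD₁, hD₀ ▸ zero_le_one⟩)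
  exact det_updateRow_one_sub_smul_ne_zero hM hirr h hx hx₀

end Stochastic

/-! ### Tiles and the graph of a scheme -/

section Tile

lemma measure_image_isometryEquiv {E : Type*} [NormedAddCommGroup E] [NormedSpace ℝ E]
    [FiniteDimensional ℝ E] [MeasurableSpace E] [BorelSpace E] (μ : Measure E)
    [μ.IsAddHaarMeasure] (φ : E ≃ᵢ E) (A : Set E) : μ (φ '' A) = μ A := by
  rw [Measure.isAddLeftInvariant_eq_smul μ (Measure.hausdorffMeasure (Module.finrank ℝ E)),
    Measure.smul_apply, Measure.smul_apply, φ.hausdorffMeasure_image]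

variable {d : ℕ}

lemma volume_image_isometryEquiv_smul (φ : Euc d ≃ᵢ Euc d) {a : ℝ} (ha : 0 ≤ a)
    (A : Set (Euc d)) : volume (φ '' (a • A)) = ENNReal.ofReal (a ^ d) * volume A := by
  rw [measure_image_isometryEquiv, Measure.addHaar_smul_of_nonneg volume ha,
    finrank_euclideanSpace_fin]

lemma IsTile.toReal_volume_pos {A : Set (Euc d)} (hA : IsTile A) : 0 < (volume A).toReal :=
  ENNReal.toReal_pos hA.2.2.1.ne' hA.1.measure_lt_top.ne

lemma IsTile.interior_nonempty {A : Set (Euc d)} (hA : IsTile A) : (interior A).Nonempty :=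
  nonempty_of_measure_ne_zero (μ := volume)
    (measure_interior_of_null_frontier hA.2.2.2 ▸ hA.2.2.1.ne')

lemma IsTile.image_smul {A : Set (Euc d)} (hA : IsTile A) (φ : Euc d ≃ᵢ Euc d) {a : ℝ}
    (ha : 0 < a) : IsTile (φ '' (a • A)) := by
  have hfrontier : volume (frontier (φ '' (a • A))) = 0 := by
    rw [← φ.coe_toHomeomorph, ← φ.toHomeomorph.image_frontier, frontier, closure_smul₀' ha.ne',
      interior_smul₀ ha.ne', ← Set.smul_set_sdiff₀ ha.ne', φ.coe_toHomeomorph,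
      volume_image_isometryEquiv_smul φ ha.le, ← frontier, hA.2.2.2, mul_zero]
  refine ⟨φ.isometry.lipschitz.isBounded_image (hA.1.smul₀ a),
    nullMeasurableSet_of_null_frontier hfrontier, ?_, hfrontier⟩
  rw [volume_image_isometryEquiv_smul φ ha.le]
  exact ENNReal.mul_pos (by simpa using pow_pos ha d) hA.2.2.1.ne'

lemma IsTile.aedisjoint {A B : Set (Euc d)} (hA : IsTile A) (hB : IsTile B)
    (hAB : Disjoint (interior A) (interior B)) : AEDisjoint volume A B :=
  hAB.aedisjoint.congr (interior_ae_eq_of_null_frontier hA.2.2.2).symm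
    (interior_ae_eq_of_null_frontier hB.2.2.2).symm

end Tile

section Graph

variable {d n : ℕ} {σ : MSScheme d n}

lemma MSScheme.Incommensurable.neZero (hinc : σ.Incommensurable) : NeZero d := by
  refine ⟨?_⟩
  rintro rfl
  obtain ⟨i, j, a, b, ⟨m, -, p, -, -, e, ha⟩, -, hab⟩ := hinc
  exact hab 0 (by simp [ha])

variable [NeZero d]

variable (σ) in
/-- The graph associated with a scheme: an edge from `i` to `j` is a substitution tile of type `j`
of the prototile `T i`, and its length is minus the logarithm of its share of the volume of
`T i`. -/
noncomputable abbrev MSScheme.graph : MetricDigraph (Fin n) where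
  Edge i := Σ j, Fin (σ.numSub i j)
  fintypeEdge _ := inferInstance
  tgt e := e.1
  len {i} e := -Real.log (σ.beta i e.1 e.2 ^ d)
  len_pos {i} e := neg_pos.2 <| Real.log_neg (pow_pos (σ.beta_pos i e.1 e.2) d)
    (pow_lt_one₀ (σ.beta_pos i e.1 e.2).le (σ.beta_lt_one i e.1 e.2) (NeZero.ne d))

namespace MSScheme

lemma exp_neg_len {i : Fin n} (e : σ.graph.Edge i) :
    Real.exp (-σ.graph.len e) = σ.beta i e.1 e.2 ^ d := by
  rw [neg_neg, Real.exp_log (pow_pos (show 0 < σ.beta i e.1 e.2 from σ.beta_pos i e.1 e.2) d)]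

lemma isTile_rule {ϱ} (hϱ : ϱ ∈ σ.rules) {i : Fin n} (e : σ.graph.Edge i) :
    IsTile (ϱ i e.1 e.2) := by
  obtain ⟨φ, hφ⟩ := σ.rules_iso ϱ hϱ i e.1 e.2
  exact hφ ▸ (σ.tile e.1).image_smul φ (σ.scale_pos i e.1 e.2)

lemma toReal_volume_rule {ϱ} (hϱ : ϱ ∈ σ.rules) {i : Fin n} (e : σ.graph.Edge i) :
    (volume (ϱ i e.1 e.2)).toReal =
      Real.exp (-σ.graph.len e) * (volume (σ.T i)).toReal := by
  obtain ⟨φ, hφ⟩ := σ.rules_iso ϱ hϱ i e.1 e.2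
  have hpos := (σ.tile i).toReal_volume_pos
  rw [hφ, volume_image_isometryEquiv_smul φ (σ.scale_pos i e.1 e.2).le, ENNReal.toReal_mul,
    ENNReal.toReal_ofReal (pow_nonneg (σ.scale_pos i e.1 e.2).le d), exp_neg_len, beta, mul_pow,
    one_div, Real.rpow_inv_natCast_pow (by positivity) (NeZero.ne d)]
  field_simp

lemma isMarkov_graph : σ.graph.IsMarkov := by
  intro i
  obtain ⟨ϱ, hϱ⟩ := σ.rules_nonempty
  have hunion : volume (σ.T i) = ∑ e : σ.graph.Edge i, volume (ϱ i e.1 e.2) := by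
    rw [← σ.rules_cover ϱ hϱ i, measure_iUnion₀ _ fun e => (isTile_rule hϱ e).2.1, tsum_fintype]
    exact fun e e' hne => (isTile_rule hϱ e).aedisjoint (isTile_rule hϱ e')
      (σ.rules_disjoint ϱ hϱ i e e' hne)
  have hreal := congrArg ENNReal.toReal hunion
  rw [ENNReal.toReal_sum fun e _ => (isTile_rule hϱ e).1.measure_lt_top.ne] at hreal
  simp only [toReal_volume_rule hϱ, ← Finset.sum_mul] at hreal
  exact (mul_eq_right₀ (σ.tile i).toReal_volume_pos.ne').1 hreal.symm

end MSScheme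

end Graph

/-! ### Packings and substitutions -/

section Packing

variable {d n : ℕ}

/-- Minus the logarithm of the volume of a tile: the length of the path that leads to it from a
tile of volume `1`. -/
noncomputable def LTile.depth (S : LTile d n) : ℝ := -Real.log (volume S.carrier).toReal

/-- A finite collection of tiles with pairwise disjoint interiors. -/
structure IsPacking (P : Finset (LTile d n)) : Prop where
  isTile : ∀ S ∈ P, IsTile S.carrier
  disjoint : (P : Set (LTile d n)).Pairwise fun S S' =>
    Disjoint (interior S.carrier) (interior S'.carrier)

variable {P : Finset (LTile d n)} {R : LTile d n → Finset (LTile d n)}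

lemma IsTile.exp_neg_depth {S : LTile d n} (hS : IsTile S.carrier) :
    Real.exp (-S.depth) = (volume S.carrier).toReal := by
  rw [LTile.depth, neg_neg, Real.exp_log hS.toReal_volume_pos]

lemma IsTile.isPacking_singleton {S : LTile d n} (hS : IsTile S.carrier) : IsPacking {S} :=
  ⟨by simpa using hS, by simp⟩

namespace IsPacking

lemma biUnion (hP : IsPacking P) (hR : ∀ S ∈ P, IsPacking (R S))
    (hsub : ∀ S ∈ P, ∀ S' ∈ R S, S'.carrier ⊆ S.carrier) : IsPacking (P.biUnion R) where
  isTile S' hS' := by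
    obtain ⟨S, hS, hS'⟩ := Finset.mem_biUnion.1 hS'
    exact (hR S hS).isTile S' hS'
  disjoint S₁' h₁ S₂' h₂ hne := by
    obtain ⟨S₁, hS₁, h₁⟩ := Finset.mem_biUnion.1 h₁
    obtain ⟨S₂, hS₂, h₂⟩ := Finset.mem_biUnion.1 h₂
    rcases eq_or_ne S₁ S₂ with rfl | hS
    · exact (hR S₁ hS₁).disjoint h₁ h₂ hne
    · exact (hP.disjoint hS₁ hS₂ hS).mono (interior_mono (hsub S₁ hS₁ S₁' h₁))
        (interior_mono (hsub S₂ hS₂ S₂' h₂))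

lemma pairwiseDisjoint (hP : IsPacking P) (hR : ∀ S ∈ P, IsPacking (R S))
    (hsub : ∀ S ∈ P, ∀ S' ∈ R S, S'.carrier ⊆ S.carrier) :
    (P : Set (LTile d n)).PairwiseDisjoint R := fun S₁ hS₁ S₂ hS₂ hne =>
  Finset.disjoint_left.2 fun S h₁ h₂ =>
    ((hR S₁ hS₁).isTile S h₁).interior_nonempty.ne_empty <| disjoint_self.1 <|
      (hP.disjoint hS₁ hS₂ hne).mono (interior_mono (hsub S₁ hS₁ S h₁))
        (interior_mono (hsub S₂ hS₂ S h₂))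

end IsPacking

variable (P) in
/-- Minus the logarithm of the maximal volume of a tile. -/
noncomputable def level : ℝ := -Real.log (P.sup fun S => volume S.carrier).toReal

lemma maxTiles_nonempty (hne : P.Nonempty) : (maxTiles P).Nonempty := by
  obtain ⟨S, hS, hmax⟩ := P.exists_max_image (fun S => volume S.carrier) hne
  exact ⟨S, Finset.mem_filter.2 ⟨hS, hmax⟩⟩

lemma depth_eq_level {S : LTile d n} (hS : S ∈ maxTiles P) : S.depth = level P := by
  obtain ⟨hS, hmax⟩ := Finset.mem_filter.1 hS
  rw [LTile.depth, level, ((Finset.sup_le hmax).antisymm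
    (Finset.le_sup (f := fun S => volume S.carrier) hS))]

namespace IsPacking

lemma depth_le_depth_iff (hP : IsPacking P) {S S' : LTile d n} (hS : S ∈ P) (hS' : S' ∈ P) :
    S.depth ≤ S'.depth ↔ volume S'.carrier ≤ volume S.carrier := by
  have hpos := (hP.isTile S hS).toReal_volume_pos
  have hpos' := (hP.isTile S' hS').toReal_volume_pos
  rw [LTile.depth, LTile.depth, neg_le_neg_iff, Real.log_le_log_iff hpos' hpos,
    ENNReal.toReal_le_toReal (hP.isTile S' hS').1.measure_lt_top.ne
      (hP.isTile S hS).1.measure_lt_top.ne]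

lemma level_le_depth (hP : IsPacking P) {S : LTile d n} (hS : S ∈ P) : level P ≤ S.depth := by
  obtain ⟨M, hM⟩ := maxTiles_nonempty ⟨S, hS⟩
  rw [← depth_eq_level hM]
  obtain ⟨hM, hmax⟩ := Finset.mem_filter.1 hM
  exact (hP.depth_le_depth_iff hM hS).2 (hmax S hS)

lemma level_lt_depth (hP : IsPacking P) {S : LTile d n} (hS : S ∈ P) (hSmax : S ∉ maxTiles P) :
    level P < S.depth := by
  refine (hP.level_le_depth hS).lt_of_ne fun heq => hSmax (Finset.mem_filter.2 ⟨hS, ?_⟩)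
  exact fun S' hS' => (hP.depth_le_depth_iff hS hS').1 (heq ▸ hP.level_le_depth hS')

lemma exp_neg_level (hP : IsPacking P) (hne : P.Nonempty) :
    Real.exp (-level P) = (P.sup fun S => volume S.carrier).toReal := by
  obtain ⟨S, hS, hsup⟩ := P.exists_mem_eq_sup hne fun S => volume S.carrier
  rw [level, neg_neg, Real.exp_log (hsup ▸ (hP.isTile S hS).toReal_volume_pos)]

end IsPacking

end Packing

section Substitution

variable {d n : ℕ} [NeZero d] {σ : MSScheme d n} {S : LTile d n} {P : Finset (LTile d n)}

lemma SubstitutesTo.exists_pieces (h : SubstitutesTo σ S P) :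
    ∃ c : σ.graph.Edge S.type → LTile d n, P = Finset.univ.image c ∧
      (∀ e, IsTile (c e).carrier) ∧ (∀ e, (c e).carrier ⊆ S.carrier) ∧
      (Pairwise fun e e' => Disjoint (interior (c e).carrier) (interior (c e').carrier)) ∧
      (∀ e, (c e).type = σ.graph.tgt e) ∧ ∀ e, (c e).depth = S.depth + σ.graph.len e := by
  obtain ⟨ϱ, hϱ, a, ha, φ, hS, hP⟩ := h
  refine ⟨_, hP, fun e => (MSScheme.isTile_rule hϱ e).image_smul φ ha, fun e => ?_,
    fun e e' hne => ?_, fun e => rfl, fun e => ?_⟩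
  · rw [hS, ← σ.rules_cover ϱ hϱ S.type]
    exact Set.image_mono (Set.smul_set_mono (Set.subset_iUnion_of_subset e subset_rfl))
  · simp only [← φ.coe_toHomeomorph, ← φ.toHomeomorph.image_interior, interior_smul₀ ha.ne']
    rw [Set.disjoint_image_iff φ.toHomeomorph.injective, ← Set.image_smul, ← Set.image_smul,
      Set.disjoint_image_iff (smul_right_injective _ ha.ne')]
    exact σ.rules_disjoint ϱ hϱ S.type e e' hne
  · have hST := (σ.tile S.type).toReal_volume_pos
    rw [LTile.depth, LTile.depth, hS, volume_image_isometryEquiv_smul φ ha.le,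
      volume_image_isometryEquiv_smul φ ha.le, ENNReal.toReal_mul, ENNReal.toReal_mul,
      MSScheme.toReal_volume_rule hϱ, ENNReal.toReal_ofReal (pow_nonneg ha.le d), mul_left_comm,
      Real.log_mul (Real.exp_pos _).ne' (by positivity), Real.log_exp]
    ring

namespace SubstitutesTo

lemma isPacking (h : SubstitutesTo σ S P) : IsPacking P := by
  obtain ⟨c, rfl, htile, -, hdisj, -⟩ := h.exists_pieces
  refine ⟨fun S' hS' => ?_, ?_⟩
  · obtain ⟨e, -, rfl⟩ := Finset.mem_image.1 hS'
    exact htile e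
  rw [Finset.coe_image, Finset.coe_univ, Set.image_univ]
  rintro _ ⟨e, rfl⟩ _ ⟨e', rfl⟩ hne
  exact hdisj fun heq => hne (congrArg c heq)

lemma carrier_subset (h : SubstitutesTo σ S P) {S' : LTile d n} (hS' : S' ∈ P) :
    S'.carrier ⊆ S.carrier := by
  obtain ⟨c, rfl, -, hsub, -⟩ := h.exists_pieces
  obtain ⟨e, -, rfl⟩ := Finset.mem_image.1 hS'
  exact hsub e

lemma depth_lt (h : SubstitutesTo σ S P) {S' : LTile d n} (hS' : S' ∈ P) :
    S.depth < S'.depth := by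
  obtain ⟨c, rfl, -, -, -, -, hdepth⟩ := h.exists_pieces
  obtain ⟨e, -, rfl⟩ := Finset.mem_image.1 hS'
  rw [hdepth e]
  exact lt_add_of_pos_right _ (σ.graph.len_pos e)

lemma nonempty (h : SubstitutesTo σ S P) : P.Nonempty := by
  obtain ⟨c, rfl, -⟩ := h.exists_pieces
  have hcard := MSScheme.isMarkov_graph (σ := σ).two_le_card_edge S.type
  have : Nonempty (σ.graph.Edge S.type) := Fintype.card_pos_iff.1 (by omega)
  exact Finset.univ_nonempty.image c

lemma sum_eq (h : SubstitutesTo σ S P) (f : Fin n → ℝ → ℝ) :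
    ∑ S' ∈ P, f S'.type S'.depth =
      ∑ e : σ.graph.Edge S.type, f (σ.graph.tgt e) (S.depth + σ.graph.len e) := by
  obtain ⟨c, rfl, htile, -, hdisj, htype, hdepth⟩ := h.exists_pieces
  have hinj : Function.Injective c := fun e e' heq => by
    by_contra hne
    have hself : Disjoint (interior (c e).carrier) (interior (c e').carrier) := hdisj hne
    rw [heq, disjoint_self] at hself
    exact (htile e').interior_nonempty.ne_empty hself
  rw [Finset.sum_image hinj.injOn]
  simp only [htype, hdepth]

end SubstitutesTo

end Substitution

/-! ### Kakutani sequences -/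

section KakutaniSeq

variable {d n : ℕ} {σ : MSScheme d n} {i : Fin n} {π : ℕ → Finset (LTile d n)}

namespace IsKakutaniSeq

lemma exists_refinement (hπ : IsKakutaniSeq σ i π) (m : ℕ) :
    ∃ R : LTile d n → Finset (LTile d n), π (m + 1) = (π m).biUnion R ∧
      (∀ S ∈ maxTiles (π m), SubstitutesTo σ S (R S)) ∧ ∀ S ∉ maxTiles (π m), R S = {S} := by
  obtain ⟨repl, hrepl, hsucc⟩ := hπ.2 m
  refine ⟨fun S => if S ∈ maxTiles (π m) then repl S else {S}, ?_,
    fun S hS => by simpa only [hS, if_true] using hrepl S hS,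
    fun S hS => by simp only [hS, if_false]⟩
  have hmax : maxTiles (π m) ⊆ π m := Finset.filter_subset _ _
  ext S'
  rw [hsucc, Finset.mem_union, Finset.mem_sdiff, Finset.mem_biUnion, Finset.mem_biUnion]
  constructor
  · rintro (⟨hS', hS'max⟩ | ⟨S, hS, hS'⟩)
    · exact ⟨S', hS', by simp [hS'max]⟩
    · exact ⟨S, hmax hS, by simpa [hS] using hS'⟩
  · rintro ⟨S, hS, hS'⟩
    split_ifs at hS' with hSmax
    · exact .inr ⟨S, hSmax, hS'⟩
    · obtain rfl := Finset.mem_singleton.1 hS'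
      exact .inl ⟨hS, hSmax⟩

variable [NeZero d]

lemma nonempty (hπ : IsKakutaniSeq σ i π) (m : ℕ) : (π m).Nonempty := by
  induction m with
  | zero => exact hπ.1 ▸ Finset.singleton_nonempty _
  | succ m ih =>
    obtain ⟨R, hsucc, hmax, -⟩ := hπ.exists_refinement m
    obtain ⟨S, hS⟩ := maxTiles_nonempty ih
    rw [hsucc, Finset.biUnion_nonempty]
    exact ⟨S, Finset.mem_of_mem_filter S hS, (hmax S hS).nonempty⟩

lemma exists_packing_refinement (hπ : IsKakutaniSeq σ i π) (m : ℕ) (hP : IsPacking (π m)) :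
    ∃ R : LTile d n → Finset (LTile d n), π (m + 1) = (π m).biUnion R ∧
      (∀ S ∈ maxTiles (π m), SubstitutesTo σ S (R S)) ∧ (∀ S ∉ maxTiles (π m), R S = {S}) ∧
      (∀ S ∈ π m, IsPacking (R S)) ∧ ∀ S ∈ π m, ∀ S' ∈ R S, S'.carrier ⊆ S.carrier := by
  obtain ⟨R, hsucc, hmax, hnmax⟩ := hπ.exists_refinement m
  refine ⟨R, hsucc, hmax, hnmax, fun S hS => ?_, fun S _ S' hS' => ?_⟩
  · by_cases hSmax : S ∈ maxTiles (π m)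
    · exact (hmax S hSmax).isPacking
    · exact hnmax S hSmax ▸ (hP.isTile S hS).isPacking_singleton
  · by_cases hSmax : S ∈ maxTiles (π m)
    · exact (hmax S hSmax).carrier_subset hS'
    · rw [hnmax S hSmax, Finset.mem_singleton] at hS'
      rw [hS']

lemma isPacking (hπ : IsKakutaniSeq σ i π) (m : ℕ) : IsPacking (π m) := by
  induction m with
  | zero => exact hπ.1 ▸ (σ.tile i).isPacking_singleton
  | succ m ih =>
    obtain ⟨R, hsucc, -, -, hR, hsub⟩ := hπ.exists_packing_refinement m ih
    exact hsucc ▸ ih.biUnion hR hsub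

lemma sum_succ (hπ : IsKakutaniSeq σ i π) (m : ℕ) (f : Fin n → ℝ → ℝ) :
    ∑ S ∈ π (m + 1), f S.type S.depth = ∑ S ∈ π m, if S ∈ maxTiles (π m) then
      ∑ e : σ.graph.Edge S.type, f (σ.graph.tgt e) (S.depth + σ.graph.len e)
        else f S.type S.depth := by
  obtain ⟨R, hsucc, hmax, hnmax, hR, hsub⟩ := hπ.exists_packing_refinement m (hπ.isPacking m)
  rw [hsucc, Finset.sum_biUnion ((hπ.isPacking m).pairwiseDisjoint hR hsub)]
  refine Finset.sum_congr rfl fun S _ => ?_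
  split_ifs with hS
  · exact (hmax S hS).sum_eq f
  · rw [hnmax S hS, Finset.sum_singleton]

lemma strictMono_level (hπ : IsKakutaniSeq σ i π) : StrictMono fun m => level (π m) := by
  refine strictMono_nat_of_lt_succ fun m => ?_
  obtain ⟨R, hsucc, hmax, hnmax⟩ := hπ.exists_refinement m
  obtain ⟨S', hS'⟩ := maxTiles_nonempty (hπ.nonempty (m + 1))
  rw [← depth_eq_level hS']
  have hS'mem := Finset.mem_of_mem_filter S' hS'
  rw [hsucc] at hS'mem
  obtain ⟨S, hS, hS'S⟩ := Finset.mem_biUnion.1 hS'mem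
  by_cases hSmax : S ∈ maxTiles (π m)
  · exact depth_eq_level hSmax ▸ (hmax S hSmax).depth_lt hS'S
  · rw [hnmax S hSmax, Finset.mem_singleton] at hS'S
    exact hS'S ▸ (hπ.isPacking m).level_lt_depth hS hSmax

lemma sum_eq_add_sum_succ (hπ : IsKakutaniSeq σ i π) {F : Fin n → ℝ → ℝ} {c : ℝ}
    (hF : ∀ a s, 0 < s → F a s = c + ∑ e : σ.graph.Edge a, F (σ.graph.tgt e) (s - σ.graph.len e))
    {m : ℕ} {t : ℝ} (ht : level (π m) < t) :
    ∑ S ∈ π m, F S.type (t - S.depth) =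
      (maxTiles (π m)).card * c + ∑ S ∈ π (m + 1), F S.type (t - S.depth) := by
  have hsub : maxTiles (π m) ⊆ π m := Finset.filter_subset _ _
  have hcard : (maxTiles (π m)).card * c =
      ∑ S ∈ π m, if S ∈ maxTiles (π m) then c else 0 := by
    rw [Finset.sum_ite_mem, Finset.inter_eq_right.2 hsub, Finset.sum_const, nsmul_eq_mul]
  rw [hπ.sum_succ m fun a s => F a (t - s), hcard, ← Finset.sum_add_distrib]
  refine Finset.sum_congr rfl fun S _ => ?_
  split_ifs with hS
  · simp only [← sub_sub]
    exact hF _ _ (sub_pos.2 (depth_eq_level hS ▸ ht))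
  · rw [zero_add]

lemma sum_eq_of_level_lt (hπ : IsKakutaniSeq σ i π) {F : Fin n → ℝ → ℝ}
    (hF : ∀ a s, 0 < s → F a s = ∑ e : σ.graph.Edge a, F (σ.graph.tgt e) (s - σ.graph.len e))
    {m : ℕ} {t : ℝ} (ht : ∀ k < m, level (π k) < t) :
    ∑ S ∈ π m, F S.type (t - S.depth) = F i (t - LTile.depth ⟨σ.T i, i⟩) := by
  induction m with
  | zero => rw [hπ.1, Finset.sum_singleton]
  | succ m ih =>
    have hstep := hπ.sum_eq_add_sum_succ (c := 0) (by simpa only [zero_add] using hF)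
      (ht m m.lt_succ_self)
    rw [mul_zero, zero_add] at hstep
    rw [← hstep, ih fun k hk => ht k (hk.trans m.lt_succ_self)]

/-- Substitution conserves the leaf count at a fixed time, and at time `level (π m)` each tile of
`π m` is a leaf. -/
lemma countType_eq (hπ : IsKakutaniSeq σ i π) (m : ℕ) (j : Fin n) :
    (countType (π m) j : ℝ) =
      σ.graph.leafCount j i (level (π m) - LTile.depth ⟨σ.T i, i⟩) := by
  rw [← hπ.sum_eq_of_level_lt (fun a s hs => σ.graph.leafCount_eq_sum j a hs)
      fun k hk => hπ.strictMono_level hk,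
    countType, Finset.card_filter, Nat.cast_sum]
  refine Finset.sum_congr rfl fun S hS => ?_
  rw [σ.graph.leafCount_of_nonpos j S.type
    (sub_nonpos.2 ((hπ.isPacking m).level_le_depth hS)), Nat.cast_ite, Nat.cast_one, Nat.cast_zero]

lemma countType_mul_sup_volume (hπ : IsKakutaniSeq σ i π) (m : ℕ) (j : Fin n) {s : ℝ}
    (hs : s = level (π m) - LTile.depth ⟨σ.T i, i⟩) :
    countType (π m) j * ((π m).sup fun S => volume S.carrier).toReal =
      (volume (σ.T i)).toReal * (Real.exp (-s) * σ.graph.leafCount j i s) := by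
  have hexp : Real.exp (-level (π m)) = (volume (σ.T i)).toReal * Real.exp (-s) := by
    rw [← (σ.tile i).exp_neg_depth (S := ⟨σ.T i, i⟩), ← Real.exp_add, hs]
    congr 1
    ring
  rw [hπ.countType_eq m j, ← (hπ.isPacking m).exp_neg_level (hπ.nonempty m), hexp, ← hs]
  ring

lemma add_sum_pathCount_le (hπ : IsKakutaniSeq σ i π) {m : ℕ} {t : ℝ}
    (ht : ∀ k < m, level (π k) < t) :
    m + ∑ S ∈ π m, ∑ h, σ.graph.pathCount h S.type (t - S.depth) ≤
      ∑ S ∈ π 0, ∑ h, σ.graph.pathCount h S.type (t - S.depth) := by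
  have hF (a : Fin n) (s : ℝ) (hs : 0 < s) : ∑ h, σ.graph.pathCount h a s =
      1 + ∑ e : σ.graph.Edge a, ∑ h, σ.graph.pathCount h (σ.graph.tgt e) (s - σ.graph.len e) := by
    simp only [σ.graph.pathCount_eq _ a s, hs, and_true, Finset.sum_add_distrib,
      Finset.sum_ite_eq, Finset.mem_univ, if_true]
    rw [Finset.sum_comm]
  induction m with
  | zero => rw [Nat.cast_zero, zero_add]
  | succ m ih =>
    have hstep := hπ.sum_eq_add_sum_succ hF (ht m m.lt_succ_self)
    have hcard : (1 : ℝ) ≤ (maxTiles (π m)).card :=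
      mod_cast (maxTiles_nonempty (hπ.nonempty m)).card_pos
    have hm := ih fun k hk => ht k (hk.trans m.lt_succ_self)
    push_cast
    linarith

lemma tendsto_level (hπ : IsKakutaniSeq σ i π) :
    Tendsto (fun m => level (π m)) atTop atTop := by
  refine tendsto_atTop_atTop_of_monotone hπ.strictMono_level.monotone fun t => ?_
  by_contra! ht
  obtain ⟨m, hm⟩ :=
    exists_nat_gt (∑ S ∈ π 0, ∑ h, σ.graph.pathCount h S.type (t - S.depth))
  have hle := hπ.add_sum_pathCount_le (m := m) fun k _ => ht k
  have hnonneg : 0 ≤ ∑ S ∈ π m, ∑ h, σ.graph.pathCount h S.type (t - S.depth) :=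
    Finset.sum_nonneg fun S _ => Finset.sum_nonneg fun h _ => σ.graph.pathCount_nonneg h _ _
  linarith

end IsKakutaniSeq

end KakutaniSeq

/-! ### Asymptotics of tile counts -/

section Scheme

variable {d n : ℕ} {σ : MSScheme d n}

namespace MSScheme

lemma Mmat_nonneg (i j : Fin n) : 0 ≤ Mmat σ i j := by
  rw [Mmat, Matrix.of_apply]
  exact Finset.sum_nonneg fun k _ => (pow_pos (σ.beta_pos i j k) d).le

lemma Irreducible.isIrreducible_Mmat (hirr : σ.Irreducible) : (Mmat σ).IsIrreducible :=
  isIrreducible_of_transGen Mmat_nonneg fun i j =>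
    Relation.TransGen.mono (fun a b hab => Finset.sum_pos
      (fun k _ => pow_pos (σ.beta_pos a b k) d) ⟨⟨0, hab⟩, Finset.mem_univ _⟩) i j (hirr i j)

variable [NeZero d]

lemma Irreducible.exists_pathLength (hirr : σ.Irreducible) (i j : Fin n) :
    ∃ s, σ.graph.PathLength i j s := by
  induction hirr i j with
  | single hab => exact ⟨_, .cons (G := σ.graph) (i := i) ⟨_, ⟨0, hab⟩⟩ (.nil _)⟩
  | tail _ hbc ih =>
    obtain ⟨s, hs⟩ := ih
    exact ⟨_, hs.trans (.cons (G := σ.graph) ⟨_, ⟨0, hbc⟩⟩ (.nil _))⟩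

lemma pathLength_sum {m : ℕ} (p : Fin (m + 1) → Fin n)
    (e : (t : Fin m) → Fin (σ.numSub (p t.castSucc) (p t.succ))) :
    σ.graph.PathLength (p 0) (p (Fin.last m))
      (∑ t : Fin m, σ.graph.len (i := p t.castSucc) ⟨p t.succ, e t⟩) := by
  induction m with
  | zero => exact .nil _
  | succ m ih =>
    rw [Fin.sum_univ_succ]
    exact .cons (G := σ.graph) (i := p 0) ⟨p (Fin.succ 0), e 0⟩
      (ih (fun t => p t.succ) fun t => e t.succ)

lemma IsClosedPathLogVol.neg_mem_loopLengths {i : Fin n} {a : ℝ} (h : σ.IsClosedPathLogVol i a) :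
    -a ∈ σ.graph.loopLengths i := by
  obtain ⟨m, -, p, hfirst, hlast, e, rfl⟩ := h
  have hpath := pathLength_sum p e
  rw [hfirst, hlast] at hpath
  rwa [← Finset.sum_neg_distrib]

lemma IsClosedPathLogVol.lt_zero {i : Fin n} {a : ℝ} (h : σ.IsClosedPathLogVol i a) : a < 0 := by
  obtain ⟨m, hm, p, -, -, e, rfl⟩ := h
  exact Finset.sum_neg (fun t _ => neg_pos.1 (σ.graph.len_pos (i := p t.castSucc) ⟨p t.succ, e t⟩))
    ⟨⟨0, hm⟩, Finset.mem_univ _⟩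

lemma hasDensePathLengths_graph (hirr : σ.Irreducible) (hinc : σ.Incommensurable) :
    σ.graph.HasDensePathLengths := by
  obtain ⟨i, j, a, b, ha, hb, hab⟩ := hinc
  refine MetricDigraph.hasDensePathLengths_of_irrational hirr.exists_pathLength
    ha.neg_mem_loopLengths hb.neg_mem_loopLengths (neg_pos.2 hb.lt_zero) ?_
  rintro ⟨q, hq⟩
  rw [neg_div_neg_eq, eq_div_iff hb.lt_zero.ne] at hq
  exact hab q hq.symm

lemma sum_edge_ite_tgt_eq (i j : Fin n) (f : σ.graph.Edge i → ℝ) :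
    (∑ e, if σ.graph.tgt e = j then f e else 0) = ∑ k, f ⟨j, k⟩ := by
  rw [Fintype.sum_sigma, Finset.sum_eq_single j (fun b _ hb => by simp [hb]) (by simp)]
  simp

lemma transitionMatrix_graph : σ.graph.transitionMatrix = Mmat σ := by
  ext i j
  exact (sum_edge_ite_tgt_eq i j _).trans (Finset.sum_congr rfl fun k _ => exp_neg_len ⟨j, k⟩)

lemma Mmat_mem_rowStochastic : Mmat σ ∈ Matrix.rowStochastic ℝ (Fin n) := by
  refine Matrix.mem_rowStochastic.2 ⟨Mmat_nonneg, funext fun i => ?_⟩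
  rw [← transitionMatrix_graph, MetricDigraph.transitionMatrix_mulVec]
  simpa using isMarkov_graph (σ := σ) i

lemma sum_exp_neg_len_mul_len (i : Fin n) :
    ∑ e : σ.graph.Edge i, Real.exp (-σ.graph.len e) * σ.graph.len e =
      -(d * ∑ j, M'mat σ i j) := by
  rw [Finset.sum_congr rfl fun e _ => by rw [exp_neg_len], Fintype.sum_sigma]
  simp only [Real.log_pow, M'mat, Matrix.of_apply, Finset.mul_sum, ← Finset.sum_neg_distrib]
  exact Finset.sum_congr rfl fun j _ => Finset.sum_congr rfl fun k _ => by ring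

lemma meanLength_adjugate (hirr : σ.Irreducible) (i : Fin n) :
    σ.graph.meanLength ((1 - Mmat σ).adjugate i) =
      d * -((1 - Mmat σ).adjugate * M'mat σ).trace := by
  rw [trace_mul_of_rows_eq _ fun a =>
    adjugate_one_sub_row_eq Mmat_mem_rowStochastic hirr.isIrreducible_Mmat a i]
  rw [MetricDigraph.meanLength, Finset.sum_congr rfl fun a _ => by rw [sum_exp_neg_len_mul_len]]
  simp only [mul_neg, Finset.sum_neg_distrib, mul_left_comm _ (d : ℝ), ← Finset.mul_sum]

lemma Qmat_row_eq (hirr : σ.Irreducible) (i j : Fin n) : Qmat σ i = Qmat σ j := by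
  ext h
  simp only [Qmat, Matrix.smul_apply,
    adjugate_one_sub_row_eq Mmat_mem_rowStochastic hirr.isIrreducible_Mmat i j]

lemma meanLength_adjugate_pos (hirr : σ.Irreducible) (i : Fin n) :
    0 < σ.graph.meanLength ((1 - Mmat σ).adjugate i) :=
  have : Nonempty (Fin n) := ⟨i⟩
  MetricDigraph.meanLength_pos isMarkov_graph
    (adjugate_one_sub_pos Mmat_mem_rowStochastic hirr.isIrreducible_Mmat i)

lemma Qmat_eq (hirr : σ.Irreducible) (i h : Fin n) :
    Qmat σ i h = d * ((1 - Mmat σ).adjugate i h /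
      σ.graph.meanLength ((1 - Mmat σ).adjugate i)) := by
  have hd : (d : ℝ) ≠ 0 := NeZero.ne _
  rw [Qmat, Matrix.smul_apply, smul_eq_mul, meanLength_adjugate hirr, ← mul_div_assoc,
    mul_div_mul_left _ _ hd, div_eq_inv_mul]

lemma Qmat_pos (hirr : σ.Irreducible) (i h : Fin n) : 0 < Qmat σ i h := by
  rw [Qmat_eq hirr]
  exact mul_pos (Nat.cast_pos.2 (NeZero.pos d)) (div_pos (adjugate_one_sub_pos
    Mmat_mem_rowStochastic hirr.isIrreducible_Mmat i h) (meanLength_adjugate_pos hirr i))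

lemma tendsto_exp_neg_mul_pathCount_graph (hirr : σ.Irreducible) (hinc : σ.Incommensurable)
    (h i : Fin n) :
    Tendsto (fun t => Real.exp (-t) * σ.graph.pathCount h i t) atTop (𝓝 (Qmat σ i h / d)) := by
  rw [Qmat_eq hirr, mul_div_cancel_left₀ _ (NeZero.ne (d : ℝ))]
  refine MetricDigraph.tendsto_exp_neg_mul_pathCount isMarkov_graph
    (hasDensePathLengths_graph hirr hinc) ?_ (meanLength_adjugate_pos hirr i).ne' h i
  rw [transitionMatrix_graph]
  exact adjugate_one_sub_row_vecMul Mmat_mem_rowStochastic i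

lemma tendsto_exp_neg_mul_leafCount_graph (hirr : σ.Irreducible) (hinc : σ.Incommensurable)
    (j i : Fin n) :
    Tendsto (fun t => Real.exp (-t) * σ.graph.leafCount j i t) atTop
      (𝓝 (∑ h, (∑ k : Fin (σ.numSub h j), (1 - σ.beta h j k ^ d) / (d : ℝ)) * Qmat σ i h)) := by
  have hlim := MetricDigraph.tendsto_exp_neg_mul_leafCount
    (tendsto_exp_neg_mul_pathCount_graph hirr hinc · i) j
  have hedges (h : Fin n) : (∑ e : σ.graph.Edge h, if σ.graph.tgt e = j then
      1 - Real.exp (-σ.graph.len e) else 0) = ∑ k, (1 - σ.beta h j k ^ d) :=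
    (sum_edge_ite_tgt_eq h j _).trans
      (Finset.sum_congr rfl fun k _ => by rw [exp_neg_len ⟨j, k⟩])
  simpa only [hedges, ← Finset.sum_div, div_mul_eq_mul_div, mul_div_assoc] using hlim

end MSScheme

end Scheme

theorem tile_count_asymptotics_normalized_general {d n : ℕ} (σ : MSScheme d n)
    (hirr : σ.Irreducible) (hinc : σ.Incommensurable) (i : Fin n)
    (π : ℕ → Finset (LTile d n)) (hπ : IsKakutaniSeq σ i π) :
    (∀ a b : Fin n, 0 < Qmat σ a b) ∧
    (∀ a b c : Fin n, Qmat σ a c = Qmat σ b c) ∧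
    ∀ j : Fin n,
      Tendsto (fun m => (countType (π m) j : ℝ) *
          ((π m).sup fun S => volume S.carrier).toReal) atTop
        (𝓝 ((volume (σ.T i)).toReal * ∑ h : Fin n,
          (∑ k : Fin (σ.numSub h j), (1 - σ.beta h j k ^ d) / (d : ℝ)) * Qmat σ i h)) := by
  have := hinc.neZero
  refine ⟨MSScheme.Qmat_pos hirr, fun a b c => congrFun (MSScheme.Qmat_row_eq hirr a b) c,
    fun j => ?_⟩
  have hlevel : Tendsto (fun m => level (π m) - LTile.depth ⟨σ.T i, i⟩) atTop atTop :=
    tendsto_atTop_add_const_right _ _ hπ.tendsto_level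
  have hlim := (MSScheme.tendsto_exp_neg_mul_leafCount_graph hirr hinc j i).comp hlevel
  exact (hlim.const_mul _).congr fun m => (hπ.countType_mul_sup_volume m j rfl).symm

/-- **Theorem 7.4.** Let `σ` be a normalized irreducible incommensurable multiscale
substitution scheme in `ℝ^d`, let `{π_m}` be a Kakutani sequence of partitions of
`T i`, and let `V_m` be the maximal volume of a tile in `π_m`. Then `Q_σ` has positive
entries and equal rows, and for every type `j`, the number of tiles of type `j` in
`π_m` multiplied by `V_m` converges to `Σ_h b_hj · q_h`, where
`b_hj = Σ_k (1 − (β_hj^(k))^d)/d`; the limit is independent of `i`. -/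
theorem tile_count_asymptotics_normalized {d n : ℕ} (σ : MSScheme d n)
    (hnorm : ∀ j : Fin n, volume (σ.T j) = 1)
    (hirr : σ.Irreducible) (hinc : σ.Incommensurable) (i : Fin n)
    (π : ℕ → Finset (LTile d n)) (hπ : IsKakutaniSeq σ i π) :
    (∀ a b : Fin n, 0 < Qmat σ a b) ∧
    (∀ a b c : Fin n, Qmat σ a c = Qmat σ b c) ∧
    ∀ j : Fin n,
      Tendsto (fun m => (countType (π m) j : ℝ) *
          ((π m).sup fun S => volume S.carrier).toReal) atTop
        (𝓝 (∑ h : Fin n,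
          (∑ k : Fin (σ.numSub h j), (1 - σ.beta h j k ^ d) / (d : ℝ)) * Qmat σ i h)) := by
  simpa only [hnorm, ENNReal.toReal_one, one_mul] using
    tile_count_asymptotics_normalized_general σ hirr hinc i π hπ
end

section
/- Let S be an n×n nonnegative real matrix which is primitive, i.e. some power of S has all entries strictly positive. Let μ > 0 and let v ∈ ℝ^n be a vector with strictly positive entries such that S·v = μ·v. Then for every fixed k_0 ∈ ℕ and all indices 1 ≤ i, j ≤ n, lim_{k→∞} (S^{k−k_0}·𝟙)_j / (S^k·𝟙)_i = μ^{−k_0}·v_j / v_i, where 𝟙 = (1,…,1)^T denotes the all-ones vector. -/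
/-!
The Doob transform `P a b = S a b * v b / (μ * v a)` is row-stochastic, because `S v = μ v`, and
`P ^ k (w / v) = μ⁻ᵏ (S ^ k w) / v`. Averaging with `P` never enlarges the range of values of a
vector, and averaging with a power whose entries are all at least `δ > 0` shrinks it by a factor
`1 - δ`, since every new value is pulled by at least `δ` towards one and the same old value. Hence
`P ^ k (w / v)` converges to a constant vector `L`, that is, `μ⁻ᵏ S ^ k w → L v`. For a nonzero
`w ≥ 0` the vector `P ^ m (w / v)` is positive for some `m`, so its least value bounds `L` below
by a positive number, and `L` cancels in the quotient.
-/

open Filter Topology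

open scoped Matrix

variable {ι R : Type*}

section StochasticAverages

variable [Fintype ι] [DecidableEq ι] [Ring R] [PartialOrder R] [IsOrderedRing R]
  {P : Matrix ι ι R} {x : ι → R} {δ : R} {a b : ι}

lemma add_mul_sub_le_mulVec_of_mem_rowStochastic {lo : R} (hP : P ∈ Matrix.rowStochastic R ι)
    (hx : ∀ c, lo ≤ x c) (hδ : δ ≤ P a b) : lo + δ * (x b - lo) ≤ (P *ᵥ x) a := by
  have hsum : (P *ᵥ x) a - lo = ∑ c, P a c * (x c - lo) := by
    simp only [mul_sub, Finset.sum_sub_distrib, ← Finset.sum_mul,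
      Matrix.sum_row_of_mem_rowStochastic hP, one_mul, Matrix.mulVec_apply_eq_sum]
  rw [← le_sub_iff_add_le', hsum]
  calc δ * (x b - lo) ≤ P a b * (x b - lo) :=
        mul_le_mul_of_nonneg_right hδ (sub_nonneg.2 (hx b))
    _ ≤ ∑ c, P a c * (x c - lo) :=
        Finset.single_le_sum (f := fun c => P a c * (x c - lo))
          (fun c _ => mul_nonneg (hP.1 a c) (sub_nonneg.2 (hx c))) (Finset.mem_univ b)

lemma mulVec_le_sub_mul_sub_of_mem_rowStochastic {hi : R} (hP : P ∈ Matrix.rowStochastic R ι)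
    (hx : ∀ c, x c ≤ hi) (hδ : δ ≤ P a b) : (P *ᵥ x) a ≤ hi - δ * (hi - x b) := by
  have h := add_mul_sub_le_mulVec_of_mem_rowStochastic (x := -x) hP
    (fun c => neg_le_neg (hx c)) hδ
  rw [Matrix.mulVec_neg, Pi.neg_apply, Pi.neg_apply, neg_sub_neg] at h
  simpa [sub_eq_add_neg, add_comm] using neg_le_neg h

lemma le_mulVec_of_mem_rowStochastic {lo : R} (hP : P ∈ Matrix.rowStochastic R ι)
    (hx : ∀ c, lo ≤ x c) (a : ι) : lo ≤ (P *ᵥ x) a := by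
  simpa using add_mul_sub_le_mulVec_of_mem_rowStochastic hP hx (hP.1 a a)

lemma mulVec_le_of_mem_rowStochastic {hi : R} (hP : P ∈ Matrix.rowStochastic R ι)
    (hx : ∀ c, x c ≤ hi) (a : ι) : (P *ᵥ x) a ≤ hi := by
  simpa using mulVec_le_sub_mul_sub_of_mem_rowStochastic (b := a) hP hx (hP.1 a a)

end StochasticAverages

section Consensus

/-- The oscillation of a real vector: its greatest minus its least entry. It measures the distance
to the constant vectors. Meant for finite nonempty `ι`, where neither bound is a junk value. -/
noncomputable def vecOsc (x : ι → ℝ) : ℝ := (⨆ a, x a) - ⨅ a, x a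

lemma vecOsc_nonneg [Finite ι] [Nonempty ι] (x : ι → ℝ) : 0 ≤ vecOsc x :=
  sub_nonneg.2 (ciInf_le_ciSup (Finite.bddBelow_range x) (Finite.bddAbove_range x))

variable [Fintype ι] [DecidableEq ι] [Nonempty ι] {P : Matrix ι ι ℝ}

lemma vecOsc_mulVec_le {δ : ℝ} (hP : P ∈ Matrix.rowStochastic ℝ ι) (hδ : ∀ a b, δ ≤ P a b)
    (x : ι → ℝ) : vecOsc (P *ᵥ x) ≤ (1 - δ) * vecOsc x := by
  obtain ⟨b⟩ := ‹Nonempty ι›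
  have hsup : ⨆ a, (P *ᵥ x) a ≤ (⨆ a, x a) - δ * ((⨆ a, x a) - x b) :=
    ciSup_le fun a => mulVec_le_sub_mul_sub_of_mem_rowStochastic hP
      (le_ciSup (Finite.bddAbove_range x)) (hδ a b)
  have hinf : (⨅ a, x a) + δ * (x b - ⨅ a, x a) ≤ ⨅ a, (P *ᵥ x) a :=
    le_ciInf fun a => add_mul_sub_le_mulVec_of_mem_rowStochastic hP
      (ciInf_le (Finite.bddBelow_range x)) (hδ a b)
  unfold vecOsc
  linarith

lemma antitone_vecOsc_pow_mulVec (hP : P ∈ Matrix.rowStochastic ℝ ι) (x : ι → ℝ) :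
    Antitone fun k => vecOsc (P ^ k *ᵥ x) := by
  refine antitone_nat_of_succ_le fun k => ?_
  simpa [pow_succ', Matrix.mulVec_mulVec] using vecOsc_mulVec_le hP hP.1 (P ^ k *ᵥ x)

lemma monotone_iInf_pow_mulVec (hP : P ∈ Matrix.rowStochastic ℝ ι) (x : ι → ℝ) :
    Monotone fun k => ⨅ a, (P ^ k *ᵥ x) a := by
  refine monotone_nat_of_le_succ fun k => le_ciInf fun a => ?_
  rw [pow_succ', ← Matrix.mulVec_mulVec]
  exact le_mulVec_of_mem_rowStochastic hP (ciInf_le (Finite.bddBelow_range _)) a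

lemma vecOsc_pow_mulVec_le {δ : ℝ} (hP : P ∈ Matrix.rowStochastic ℝ ι) (hδ : ∀ a b, δ ≤ P a b)
    (x : ι → ℝ) (q : ℕ) : vecOsc (P ^ q *ᵥ x) ≤ (1 - δ) ^ q * vecOsc x := by
  obtain ⟨a⟩ := ‹Nonempty ι›
  have hδ1 : δ ≤ 1 := (hδ a a).trans (Matrix.le_one_of_mem_rowStochastic hP)
  induction q with
  | zero => simp
  | succ q ih =>
    calc vecOsc (P ^ (q + 1) *ᵥ x) = vecOsc (P *ᵥ P ^ q *ᵥ x) := by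
          rw [pow_succ', Matrix.mulVec_mulVec]
      _ ≤ (1 - δ) * vecOsc (P ^ q *ᵥ x) := vecOsc_mulVec_le hP hδ _
      _ ≤ (1 - δ) * ((1 - δ) ^ q * vecOsc x) :=
          mul_le_mul_of_nonneg_left ih (sub_nonneg.2 hδ1)
      _ = (1 - δ) ^ (q + 1) * vecOsc x := by ring

lemma tendsto_vecOsc_pow_mulVec_of_pos (hP : P ∈ Matrix.rowStochastic ℝ ι)
    (hpos : ∀ a b, 0 < P a b) (x : ι → ℝ) :
    Tendsto (fun q => vecOsc (P ^ q *ᵥ x)) atTop (𝓝 0) := by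
  obtain ⟨⟨c, d⟩, hmin⟩ := Finite.exists_min fun p : ι × ι => P p.1 p.2
  have hle : P c d ≤ 1 := Matrix.le_one_of_mem_rowStochastic hP
  have hgeom : Tendsto (fun q => (1 - P c d) ^ q * vecOsc x) atTop (𝓝 0) := by
    simpa using (tendsto_pow_atTop_nhds_zero_of_lt_one (sub_nonneg.2 hle)
      (sub_lt_self 1 (hpos c d))).mul_const (vecOsc x)
  exact squeeze_zero (fun q => vecOsc_nonneg _)
    (vecOsc_pow_mulVec_le hP (fun a b => hmin (a, b)) x) hgeom

lemma tendsto_vecOsc_pow_mulVec (hP : P ∈ Matrix.rowStochastic ℝ ι)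
    (hprim : ∃ m : ℕ, ∀ a b, 0 < (P ^ m) a b) (x : ι → ℝ) :
    Tendsto (fun k => vecOsc (P ^ k *ᵥ x)) atTop (𝓝 0) := by
  obtain ⟨m, hm⟩ := hprim
  have hsub : Tendsto (fun q => vecOsc (P ^ (m * q) *ᵥ x)) atTop (𝓝 0) := by
    simpa only [pow_mul] using tendsto_vecOsc_pow_mulVec_of_pos (pow_mem hP m) hm x
  refine tendsto_order.2 ⟨fun ε hε => .of_forall fun k => hε.trans_le (vecOsc_nonneg _),
    fun ε hε => ?_⟩
  obtain ⟨q, hq⟩ := (hsub.eventually_lt_const hε).exists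
  filter_upwards [eventually_ge_atTop (m * q)] with k hk
  exact (antitone_vecOsc_pow_mulVec hP x hk).trans_lt hq

theorem exists_tendsto_pow_mulVec_const (hP : P ∈ Matrix.rowStochastic ℝ ι)
    (hprim : ∃ m : ℕ, ∀ a b, 0 < (P ^ m) a b) (x : ι → ℝ) :
    ∃ L : ℝ, Tendsto (fun k => P ^ k *ᵥ x) atTop (𝓝 fun _ => L) := by
  set lo : ℕ → ℝ := fun k => ⨅ a, (P ^ k *ᵥ x) a
  have hosc := tendsto_vecOsc_pow_mulVec hP hprim x
  have hbdd : BddAbove (Set.range lo) := by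
    obtain ⟨a⟩ := ‹Nonempty ι›
    refine ⟨⨆ a, x a, Set.forall_mem_range.2 fun k => ?_⟩
    exact (ciInf_le (Finite.bddBelow_range _) a).trans (mulVec_le_of_mem_rowStochastic
      (pow_mem hP k) (le_ciSup (Finite.bddAbove_range x)) a)
  have hlo : Tendsto lo atTop (𝓝 (⨆ k, lo k)) :=
    tendsto_atTop_ciSup (monotone_iInf_pow_mulVec hP x) hbdd
  refine ⟨⨆ k, lo k, tendsto_pi_nhds.2 fun a => ?_⟩
  have hhi : Tendsto (fun k => ⨆ a, (P ^ k *ᵥ x) a) atTop (𝓝 (⨆ k, lo k)) := by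
    simpa [lo, vecOsc] using hlo.add hosc
  exact tendsto_of_tendsto_of_tendsto_of_le_of_le hlo hhi
    (fun k => ciInf_le (Finite.bddBelow_range _) a) (fun k => le_ciSup (Finite.bddAbove_range _) a)

lemma pos_of_tendsto_pow_mulVec_const {x : ι → ℝ} {L : ℝ} (hP : P ∈ Matrix.rowStochastic ℝ ι)
    (hx : ∃ m : ℕ, ∀ a, 0 < (P ^ m *ᵥ x) a)
    (hL : Tendsto (fun k => P ^ k *ᵥ x) atTop (𝓝 fun _ => L)) : 0 < L := by
  obtain ⟨m, hm⟩ := hx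
  obtain ⟨c, hc⟩ := Finite.exists_min (P ^ m *ᵥ x)
  refine (hm c).trans_le (ge_of_tendsto (tendsto_pi_nhds.1 hL c) ?_)
  filter_upwards [eventually_ge_atTop m] with k hk
  rw [← Nat.sub_add_cancel hk, pow_add, ← Matrix.mulVec_mulVec]
  exact le_mulVec_of_mem_rowStochastic (pow_mem hP _) hc c

end Consensus

lemma mulVec_pos_of_forall_pos [Fintype ι] [Semiring R] [PartialOrder R] [IsStrictOrderedRing R]
    {A : Matrix ι ι R} {x : ι → R} (hA : ∀ a b, 0 < A a b) (hx : 0 < x) (a : ι) :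
    0 < (A *ᵥ x) a := by
  obtain ⟨hx0, b, hb⟩ := Pi.lt_def.1 hx
  exact Finset.sum_pos' (fun c _ => mul_nonneg (hA a c).le (hx0 c))
    ⟨b, Finset.mem_univ b, mul_pos (hA a b) hb⟩

section DoobTransform

/-- The Doob `v`-transform of `S` with eigenvalue `μ`: the conjugate of `μ⁻¹ • S` by the diagonal
matrix of `v`. It turns a nonnegative matrix with a positive eigenvector `v` into a row-stochastic
one. -/
def doobTransform [Field R] (S : Matrix ι ι R) (μ : R) (v : ι → R) : Matrix ι ι R :=
  Matrix.of fun a b => S a b * v b / (μ * v a)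

lemma doobTransform_one [DecidableEq ι] [Field R] {v : ι → R} (hv : ∀ a, v a ≠ 0) :
    doobTransform 1 1 v = 1 := by
  ext a b
  rcases eq_or_ne a b with rfl | hab
  · simp [doobTransform, hv a]
  · simp [doobTransform, hab]

lemma doobTransform_mul [Fintype ι] [Field R] {v : ι → R} (hv : ∀ a, v a ≠ 0)
    (S T : Matrix ι ι R) (μ ν : R) :
    doobTransform S μ v * doobTransform T ν v = doobTransform (S * T) (μ * ν) v := by
  ext a b
  simp only [doobTransform, Matrix.mul_apply, Matrix.of_apply, Finset.sum_mul, Finset.sum_div]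
  refine Finset.sum_congr rfl fun c _ => ?_
  have := hv c
  field_simp

lemma doobTransform_pow [Fintype ι] [DecidableEq ι] [Field R] {v : ι → R}
    (hv : ∀ a, v a ≠ 0) (S : Matrix ι ι R) (μ : R) (k : ℕ) :
    doobTransform S μ v ^ k = doobTransform (S ^ k) (μ ^ k) v := by
  induction k with
  | zero => simp [doobTransform_one hv]
  | succ k ih => rw [pow_succ, ih, doobTransform_mul hv, pow_succ, pow_succ]

lemma doobTransform_mulVec_div [Fintype ι] [Field R] {v : ι → R} (hv : ∀ a, v a ≠ 0)
    (S : Matrix ι ι R) (μ : R) (w : ι → R) :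
    doobTransform S μ v *ᵥ (w / v) = (μ⁻¹ • S *ᵥ w) / v := by
  ext a
  simp only [doobTransform, Matrix.mulVec_apply_eq_sum, Matrix.of_apply, Pi.div_apply,
    Pi.smul_apply, smul_eq_mul, Finset.mul_sum, Finset.sum_div]
  refine Finset.sum_congr rfl fun b _ => ?_
  have := hv b
  field_simp

lemma doobTransform_mem_rowStochastic [Fintype ι] [DecidableEq ι] [Field R] [LinearOrder R]
    [IsStrictOrderedRing R] {S : Matrix ι ι R} {μ : R} {v : ι → R} (hS : ∀ a b, 0 ≤ S a b)
    (hμ : 0 < μ) (hv : ∀ a, 0 < v a) (heig : S *ᵥ v = μ • v) :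
    doobTransform S μ v ∈ Matrix.rowStochastic R ι := by
  refine Matrix.mem_rowStochastic_iff_sum.2 ⟨fun a b => ?_, fun a => ?_⟩
  · exact div_nonneg (mul_nonneg (hS a b) (hv b).le) (mul_pos hμ (hv a)).le
  · have hrow : ∑ b, S a b * v b = μ * v a := congrFun heig a
    simp only [doobTransform, Matrix.of_apply, ← Finset.sum_div, hrow]
    exact div_self (mul_pos hμ (hv a)).ne'

end DoobTransform

theorem exists_pos_tendsto_inv_pow_smul_pow_mulVec [Fintype ι] [DecidableEq ι]
    {S : Matrix ι ι ℝ} {μ : ℝ} {v w : ι → ℝ} (hS : ∀ a b, 0 ≤ S a b)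
    (hprim : ∃ m : ℕ, ∀ a b, 0 < (S ^ m) a b) (hμ : 0 < μ) (hv : ∀ a, 0 < v a)
    (heig : S *ᵥ v = μ • v) (hw : 0 < w) :
    ∃ L : ℝ, 0 < L ∧ Tendsto (fun k => (μ ^ k)⁻¹ • S ^ k *ᵥ w) atTop (𝓝 (L • v)) := by
  obtain ⟨hw0, b, hb⟩ := Pi.lt_def.1 hw
  have : Nonempty ι := ⟨b⟩
  have hv0 : ∀ a, v a ≠ 0 := fun a => (hv a).ne'
  have hP := doobTransform_mem_rowStochastic hS hμ hv heig
  obtain ⟨m, hm⟩ := hprim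
  have hPm : ∀ a b, 0 < (doobTransform S μ v ^ m) a b := fun a b => by
    rw [doobTransform_pow hv0]
    exact div_pos (mul_pos (hm a b) (hv b)) (mul_pos (pow_pos hμ m) (hv a))
  obtain ⟨L, hL⟩ := exists_tendsto_pow_mulVec_const hP ⟨m, hPm⟩ (w / v)
  have hwv : 0 < w / v :=
    Pi.lt_def.2 ⟨fun a => div_nonneg (hw0 a) (hv a).le, b, div_pos hb (hv b)⟩
  refine ⟨L, pos_of_tendsto_pow_mulVec_const hP ⟨m, mulVec_pos_of_forall_pos hPm hwv⟩ hL, ?_⟩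
  simp only [doobTransform_pow hv0, doobTransform_mulVec_div hv0] at hL
  refine tendsto_pi_nhds.2 fun a => ?_
  simpa [hv0 a] using (tendsto_pi_nhds.1 hL a).mul_const (v a)

lemma tendsto_comp_sub_div_of_tendsto_inv_pow_mul {𝕜 : Type*} [Field 𝕜] [TopologicalSpace 𝕜]
    [ContinuousMul 𝕜] [ContinuousInv₀ 𝕜] {x y : ℕ → 𝕜} {μ A B : 𝕜} (hμ : μ ≠ 0) (hB : B ≠ 0)
    (hx : Tendsto (fun k => (μ ^ k)⁻¹ * x k) atTop (𝓝 A))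
    (hy : Tendsto (fun k => (μ ^ k)⁻¹ * y k) atTop (𝓝 B)) (k₀ : ℕ) :
    Tendsto (fun k => x (k - k₀) / y k) atTop (𝓝 ((μ ^ k₀)⁻¹ * (A / B))) := by
  refine (((hx.comp (tendsto_sub_atTop_nat k₀)).div hy hB).const_mul _).congr' ?_
  -- For `k < k₀` the truncated subtraction breaks the identity `μ ^ k = μ ^ (k - k₀) * μ ^ k₀`.
  filter_upwards [eventually_ge_atTop k₀] with k hk
  have hpow : μ ^ k = μ ^ (k - k₀) * μ ^ k₀ := by rw [← pow_add, Nat.sub_add_cancel hk]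
  simp only [Pi.div_apply, Function.comp_apply, hpow]
  field_simp

theorem primitive_matrix_ones_ratio_limit_general [Fintype ι] [DecidableEq ι]
    (S : Matrix ι ι ℝ) (hS : ∀ i j, 0 ≤ S i j) (hprim : ∃ k : ℕ, ∀ i j, 0 < (S ^ k) i j)
    (μ : ℝ) (hμ : 0 < μ) (v : ι → ℝ) (hv : ∀ i, 0 < v i) (heig : S *ᵥ v = μ • v)
    (w : ι → ℝ) (hw : 0 < w) (k₀ : ℕ) (i j : ι) :
    Tendsto (fun k => (S ^ (k - k₀) *ᵥ w) j / (S ^ k *ᵥ w) i) atTop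
      (𝓝 ((μ ^ k₀)⁻¹ * (v j / v i))) := by
  obtain ⟨L, hL, hlim⟩ := exists_pos_tendsto_inv_pow_smul_pow_mulVec hS hprim hμ hv heig hw
  have hcoord := tendsto_pi_nhds.1 hlim
  have hratio := tendsto_comp_sub_div_of_tendsto_inv_pow_mul hμ.ne' (mul_pos hL (hv i)).ne'
    (hcoord j) (hcoord i) k₀
  simpa only [Pi.smul_apply, smul_eq_mul, mul_div_mul_left _ _ hL.ne'] using hratio

/-- **Perron projection limit.** Let `S` be a primitive nonnegative `n × n` real
matrix, `μ > 0` and `v` a strictly positive vector with `S · v = μ · v` (so that `μ`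
is the Perron–Frobenius eigenvalue of `S`). Then for every fixed `k₀ ∈ ℕ` and all
indices `i, j`,
`(S^(k−k₀) · 𝟙)_j / (S^k · 𝟙)_i → μ^(−k₀) · v_j / v_i` as `k → ∞`, where `𝟙` is the
all-ones vector. -/
theorem primitive_matrix_ones_ratio_limit {n : ℕ}
    (S : Matrix (Fin n) (Fin n) ℝ) (hS : ∀ i j, 0 ≤ S i j)
    (hprim : ∃ k : ℕ, ∀ i j, 0 < (S ^ k) i j)
    (μ : ℝ) (hμ : 0 < μ) (v : Fin n → ℝ) (hv : ∀ i, 0 < v i)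
    (heig : Matrix.mulVec S v = μ • v)
    (k₀ : ℕ) (i j : Fin n) :
    Tendsto
      (fun k => Matrix.mulVec (S ^ (k - k₀)) (fun _ => (1 : ℝ)) j /
        Matrix.mulVec (S ^ k) (fun _ => (1 : ℝ)) i)
      atTop (𝓝 ((μ ^ k₀)⁻¹ * (v j / v i))) := by
  have hone : (0 : Fin n → ℝ) < fun _ => 1 := Pi.lt_def.2 ⟨fun _ => zero_le_one, i, one_pos⟩
  exact primitive_matrix_ones_ratio_limit_general S hS hprim μ hμ v hv heig _ hone k₀ i j
end
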